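/- Let A be a Timed Büchi Automaton and let Γ be an SCC of the zone graph ZG^a(A) reachable from the initial node such that Γ contains an accepting node, some transition of Γ resets a clock x, and some transition of Γ has a guard implying x≥1 (that is, (ν+δ)(x)≥1 for all ν in the source zone and δ≥0 with ν+δ satisfying the guard). Then A has a non-Zeno run satisfying the Büchi condition. -/

import Mathlib

/-!
The SCC yields a lasso in the zone graph whose cycle visits an accepting node, an edge that resets
`x` and an edge whose guard forces `x ≥ 1`. It suffices to find a concrete run along this lasso
(`exists_run_along`): one time unit passes between a reset of `x` and a later moment with `x ≥ 1`,
and this happens infinitely often, so time diverges (`nonZeno_of_recurrent`).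

A lasso uses finitely many transitions, which test finitely many clocks. The clock set is arbitrary,
so everything is first projected to the tested clocks. On finitely many clocks the crucial fact is
`exists_rEq_of_mem_approxZ`: if `T` is a convex union of unbounded regions (classes for integer
difference constraints with no maximal constant), every valuation `p` of `approxZ M T` is region
equivalent to a valuation of `T`. For its proof, consider the face `F` of `approxZ M T` that has `p`
in its relative interior. It is again a convex union of d-regions, and it is generated by `T ∩ F`
(`face_subset`); hence every valid integer difference constraint that holds on `T ∩ F` holds at `p`,
strictly unless it is an equality on `F` (`face_form`). Since a convex union of unbounded regions is
determined by its difference constraints (`agree_on`, and `agree_on_and_large` for the clocks above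
`M`), `T ∩ F` contains a point that agrees with `p` on the clocks at most `M` and exceeds `M` on the
others.

Successor sets of convex unions of unbounded regions are again of this kind (`convexVal_post`,
`eSat_post`), and region equivalence is a time-abstract bisimulation. Every finite prefix of an
abstract path is therefore realised, starting from its last node and going backwards, and because
there are finitely many regions König's lemma gives an infinite concrete run (`exists_run`).
-/

/-! ## Framework for Timed Büchi Automata -/

/-- Comparison operators `<, ≤, =, ≥, >` used in clock constraints. -/
inductive CmpOp where
  | lt | le | eq | ge | gt

def CmpOp.sat : CmpOp → ℝ → ℝ → Prop
  | .lt, a, b => a < b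
  | .le, a, b => a ≤ b
  | .eq, a, b => a = b
  | .ge, a, b => a ≥ b
  | .gt, a, b => a > b

/-- A clock valuation assigns a non-negative real to every clock. -/
abbrev ClockVal (X : Type) := X → NNReal

/-- An atomic clock constraint `x # c`. -/
structure AtomicConstraint (X : Type) where
  clock : X
  cmp : CmpOp
  bound : ℕ

/-- A guard is a finite conjunction of atomic constraints. -/
abbrev Guard (X : Type) := List (AtomicConstraint X)

def Guard.sat {X : Type} (g : Guard X) (v : ClockVal X) : Prop :=
  ∀ c ∈ g, CmpOp.sat c.cmp (v c.clock : ℝ) (c.bound : ℝ)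

/-- A transition `(q, g, R, q')` of a timed automaton. -/
structure TBATrans (Q X : Type) where
  src : Q
  guard : Guard X
  reset : Set X
  dst : Q

/-- A Timed Büchi Automaton with states `Q` and clocks `X`. -/
structure TBA (Q X : Type) where
  q0 : Q
  trans : Set (TBATrans Q X)
  acc : Set Q

/-- Time elapse: `(ν+δ)(x) = ν(x)+δ`. -/
def ClockVal.add {X : Type} (v : ClockVal X) (d : NNReal) : ClockVal X := fun x => v x + d

open Classical in
/-- `[R]ν` sets clocks in `R` to `0` and leaves others unchanged. -/
noncomputable def resetVal {X : Type} (R : Set X) (v : ClockVal X) : ClockVal X :=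
  fun x => if x ∈ R then 0 else v x

/-- The valuation assigning `0` to every clock. -/
def zeroVal (X : Type) : ClockVal X := fun _ => 0

/-- `(q,ν) →^{δ,t} (q',ν')`. -/
def TBA.Step {Q X : Type} (A : TBA Q X) (t : TBATrans Q X) (d : NNReal)
    (c c' : Q × ClockVal X) : Prop :=
  t ∈ A.trans ∧ t.src = c.1 ∧ t.dst = c'.1 ∧
    Guard.sat t.guard (ClockVal.add c.2 d) ∧ c'.2 = resetVal t.reset (ClockVal.add c.2 d)

/-- A run of `A` given by its configurations, delays and transitions. -/
def IsRun {Q X : Type} (A : TBA Q X) (st : ℕ → Q × ClockVal X) (ds : ℕ → NNReal)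
    (ts : ℕ → TBATrans Q X) : Prop :=
  st 0 = (A.q0, zeroVal X) ∧ ∀ i, A.Step (ts i) (ds i) (st i) (st (i + 1))

/-- The run visits accepting states infinitely often. -/
def BuchiRun {Q X : Type} (A : TBA Q X) (st : ℕ → Q × ClockVal X) : Prop :=
  {i | (st i).1 ∈ A.acc}.Infinite

/-- A sequence of delays is non-Zeno when its total duration is infinite. -/
def NonZeno (ds : ℕ → NNReal) : Prop := (∑' i, (ds i : ENNReal)) = ⊤

def TBA.BoundsConsts {Q X : Type} (A : TBA Q X) (M : ℕ) : Prop :=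
  ∀ t ∈ A.trans, ∀ c ∈ t.guard, c.bound ≤ M

/-- `M` is the maximal constant appearing in the guards of `A`
(`M = 0` when there is no constraint at all). -/
def TBA.IsMaxConst {Q X : Type} (A : TBA Q X) (M : ℕ) : Prop :=
  A.BoundsConsts M ∧ (M = 0 ∨ ∃ t ∈ A.trans, ∃ c ∈ t.guard, c.bound = M)

/-! ## Regions -/

/-- Region equivalence `ν ≅_M ν'`. -/
def RegEquiv {X : Type} (M : ℕ) (v v' : ClockVal X) : Prop :=
  ∀ x y : X,
    (((M : ℝ) < (v x : ℝ)) ↔ ((M : ℝ) < (v' x : ℝ))) ∧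
    ((v x : ℝ) ≤ M → ⌊(v x : ℝ)⌋ = ⌊(v' x : ℝ)⌋) ∧
    ((v x : ℝ) ≤ M → (Int.fract (v x : ℝ) = 0 ↔ Int.fract (v' x : ℝ) = 0)) ∧
    ((v x : ℝ) ≤ M → (v y : ℝ) ≤ M →
      (Int.fract (v x : ℝ) ≤ Int.fract (v y : ℝ) ↔
        Int.fract (v' x : ℝ) ≤ Int.fract (v' y : ℝ)))

/-- Diagonal region equivalence `ν ≅^d_M ν'`. -/
def DRegEquiv {X : Type} (M : ℕ) (v v' : ClockVal X) : Prop :=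
  (∀ x : X,
    (((M : ℝ) < (v x : ℝ)) ↔ ((M : ℝ) < (v' x : ℝ))) ∧
    ((v x : ℝ) ≤ M → ⌊(v x : ℝ)⌋ = ⌊(v' x : ℝ)⌋) ∧
    ((v x : ℝ) ≤ M → (Int.fract (v x : ℝ) = 0 ↔ Int.fract (v' x : ℝ) = 0))) ∧
  (∀ x y : X, ∀ c : ℤ, -(M : ℤ) < c → c < (M : ℤ) →
    ((v x : ℝ) - (v y : ℝ) ≤ (c : ℝ) ↔ (v' x : ℝ) - (v' y : ℝ) ≤ (c : ℝ)))

/-- `r` is an equivalence class of the relation `E`. -/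
def EqClass {X : Type} (E : ClockVal X → ClockVal X → Prop) (r : Set (ClockVal X)) : Prop :=
  ∃ v, r = {v' | E v v'}

/-- Nodes of region/simulation/zone graphs: a state paired with a set of valuations. -/
abbrev RNode (Q X : Type) := Q × Set (ClockVal X)

/-- A transition `(q,r) →^t (q',r')` of the region graph built on the equivalence `E`. -/
def RGTrans {Q X : Type} (A : TBA Q X) (E : ClockVal X → ClockVal X → Prop)
    (t : TBATrans Q X) (n n' : RNode Q X) : Prop :=
  EqClass E n.2 ∧ EqClass E n'.2 ∧
    ∃ v ∈ n.2, ∃ d : NNReal, ∃ v' ∈ n'.2, A.Step t d (n.1, v) (n'.1, v')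

def PreStable {Q X : Type} (A : TBA Q X) (t : TBATrans Q X) (n n' : RNode Q X) : Prop :=
  ∀ v ∈ n.2, ∃ v' ∈ n'.2, ∃ d : NNReal, A.Step t d (n.1, v) (n'.1, v')

def PostStable {Q X : Type} (A : TBA Q X) (t : TBATrans Q X) (n n' : RNode Q X) : Prop :=
  ∀ v' ∈ n'.2, ∃ v ∈ n.2, ∃ d : NNReal, A.Step t d (n.1, v) (n'.1, v')

/-- A progressive path: every clock is either eventually always above `M`,
or is both reset and strictly positive infinitely often. -/
def Progressive {Q X : Type} (M : ℕ) (nodes : ℕ → RNode Q X) : Prop :=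
  ∀ x : X,
    (∃ n : ℕ, ∀ i > n, ∀ v ∈ (nodes i).2, (M : ℝ) < (v x : ℝ)) ∨
    (∀ n : ℕ, (∃ i > n, ∀ v ∈ (nodes i).2, v x = 0) ∧
              (∃ j > n, ∀ v ∈ (nodes j).2, 0 < v x))

/-! ## Zones and abstraction operators -/

inductive ZoneConstraint (X : Type) where
  | single (x : X) (cmp : CmpOp) (c : ℕ)
  | diff (x y : X) (cmp : CmpOp) (c : ℕ)

def ZoneConstraint.sat {X : Type} : ZoneConstraint X → ClockVal X → Prop
  | .single x cmp c, v => CmpOp.sat cmp (v x : ℝ) (c : ℝ)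
  | .diff x y cmp c, v => CmpOp.sat cmp ((v x : ℝ) - (v y : ℝ)) (c : ℝ)

/-- A zone: a set of valuations definable by a finite conjunction of constraints
`x # c` or `x − y # c`. -/
def IsZone {X : Type} (Z : Set (ClockVal X)) : Prop :=
  ∃ l : List (ZoneConstraint X), Z = {v | ∀ c ∈ l, ZoneConstraint.sat c v}

/-- `Closure_M(Z)`: smallest union of regions containing `Z`. -/
def closureR {X : Type} (M : ℕ) (Z : Set (ClockVal X)) : Set (ClockVal X) :=
  {v' | ∃ v ∈ Z, RegEquiv M v v'}

/-- `Closure^d_M(Z)`: smallest union of d-regions containing `Z`. -/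
def closureD {X : Type} (M : ℕ) (Z : Set (ClockVal X)) : Set (ClockVal X) :=
  {v' | ∃ v ∈ Z, DRegEquiv M v v'}

/-- `S` is a union of equivalence classes of `E`. -/
def UnionOfClasses {X : Type} (E : ClockVal X → ClockVal X → Prop)
    (S : Set (ClockVal X)) : Prop :=
  ∀ v ∈ S, ∀ v', E v v' → v' ∈ S

/-- Convexity for sets of clock valuations. -/
def ConvexVal {X : Type} (S : Set (ClockVal X)) : Prop :=
  ∀ u ∈ S, ∀ w ∈ S, ∀ θ : NNReal, θ ≤ 1 →
    (fun x => θ * u x + (1 - θ) * w x) ∈ S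

/-- `Approx_M(Z)`: smallest convex union of d-regions containing `Z`. -/
def approxZ {X : Type} (M : ℕ) (Z : Set (ClockVal X)) : Set (ClockVal X) :=
  ⋂₀ {S | Z ⊆ S ∧ ConvexVal S ∧ UnionOfClasses (DRegEquiv M) S}

/-! ## Simulation graphs and the zone graph -/

/-- `{ν' | ∃ ν ∈ S, δ ≥ 0, (q,ν) →^{δ,t} (q',ν')}`. -/
def postSet {Q X : Type} (A : TBA Q X) (t : TBATrans Q X) (q : Q)
    (S : Set (ClockVal X)) (q' : Q) : Set (ClockVal X) :=
  {v' | ∃ v ∈ S, ∃ d : NNReal, A.Step t d (q, v) (q', v')}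

/-- Transition of the simulation graph built with abstraction operator `op`. -/
def SGTrans {Q X : Type} (A : TBA Q X) (op : Set (ClockVal X) → Set (ClockVal X))
    (t : TBATrans Q X) (n n' : RNode Q X) : Prop :=
  (postSet A t n.1 n.2 n'.1).Nonempty ∧ n'.2 = op (postSet A t n.1 n.2 n'.1)

/-- Initial node `(q0, {ν0})` of the simulation/zone graphs. -/
def ZGInit {Q X : Type} (A : TBA Q X) : RNode Q X := (A.q0, {zeroVal X})

/-- A step of the zone graph `ZG^a(A)` (simulation graph with `Approx_M`). -/
def ZGStep {Q X : Type} (A : TBA Q X) (M : ℕ) (n n' : RNode Q X) : Prop :=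
  ∃ t, SGTrans A (approxZ M) t n n'

/-- Nodes of `ZG^a(A)` reachable from the initial node. -/
def ZGReach {Q X : Type} (A : TBA Q X) (M : ℕ) : Set (RNode Q X) :=
  {n | Relation.ReflTransGen (ZGStep A M) (ZGInit A) n}

/-! ## Bounded, lower-bounded, reset and zero-checked clocks -/

/-- Clock `x` is bounded by transition `t` taken from the set of valuations `Z`. -/
def BoundsClock {Q X : Type} (t : TBATrans Q X) (Z : Set (ClockVal X)) (x : X) : Prop :=
  ∃ c : ℕ, ∀ v ∈ Z, ∀ d : NNReal, Guard.sat t.guard (ClockVal.add v d) →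
    ((ClockVal.add v d) x : ℝ) ≤ c

/-- The guard of `t`, taken from `Z`, implies `x ≥ 1`. -/
def LowerBoundsClock {Q X : Type} (t : TBATrans Q X) (Z : Set (ClockVal X)) (x : X) : Prop :=
  ∀ v ∈ Z, ∀ d : NNReal, Guard.sat t.guard (ClockVal.add v d) →
    (1 : ℝ) ≤ ((ClockVal.add v d) x : ℝ)

/-- Transition `t` taken from `Z` is a zero-check. -/
def ZeroCheck {Q X : Type} (t : TBATrans Q X) (Z : Set (ClockVal X)) : Prop :=
  ∃ x : X, ∀ v ∈ Z, ∀ d : NNReal, Guard.sat t.guard (ClockVal.add v d) →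
    (ClockVal.add v d) x = 0

/-- A path of the zone graph is blocked if some clock is bounded infinitely often
but reset only finitely often. -/
def ZBlocked {Q X : Type} (nodes : ℕ → RNode Q X) (ts : ℕ → TBATrans Q X) : Prop :=
  ∃ x : X, {i | BoundsClock (ts i) (nodes i).2 x}.Infinite ∧
           {i | x ∈ (ts i).reset}.Finite

/-! ## The guessing zone graph -/

/-- Nodes `(q, Z, Y)` of the guessing zone graph. -/
abbrev GNode (Q X : Type) := Q × Set (ClockVal X) × Set X

/-- Transitions of `GZG^a(A)`: `some t` is an action transition,
`none` is the auxiliary letter `τ`. -/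
def GZGTrans {Q X : Type} (A : TBA Q X) (M : ℕ) :
    Option (TBATrans Q X) → GNode Q X → GNode Q X → Prop
  | some t, n, n' =>
      SGTrans A (approxZ M) t (n.1, n.2.1) (n'.1, n'.2.1) ∧
      n'.2.2 = n.2.2 ∪ t.reset ∧
      ∃ v ∈ n.2.1, ∃ d : NNReal, ∃ v' ∈ n'.2.1,
        (∀ x, x ∉ n.2.2 → 0 < (ClockVal.add v d) x) ∧
        A.Step t d (n.1, v) (n'.1, v')
  | none, n, n' => n'.1 = n.1 ∧ n'.2.1 = n.2.1 ∧ (n'.2.2 = (∅ : Set X) ∨ n'.2.2 = n.2.2)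

/-- Initial node `(q0, {ν0}, X)` of `GZG^a(A)`. -/
def GZGInit {Q X : Type} (A : TBA Q X) : GNode Q X := (A.q0, {zeroVal X}, Set.univ)

def GZGStep {Q X : Type} (A : TBA Q X) (M : ℕ) (n n' : GNode Q X) : Prop :=
  ∃ l, GZGTrans A M l n n'

/-- Nodes of `GZG^a(A)` reachable from the initial node. -/
def GZGReach {Q X : Type} (A : TBA Q X) (M : ℕ) : Set (GNode Q X) :=
  {n | Relation.ReflTransGen (GZGStep A M) (GZGInit A) n}

/-- A path of the guessing zone graph is blocked if some clock is bounded by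
infinitely many of its transitions but reset by only finitely many. -/
def GBlocked {Q X : Type} (nodes : ℕ → GNode Q X)
    (labels : ℕ → Option (TBATrans Q X)) : Prop :=
  ∃ x : X,
    {i | ∃ t, labels i = some t ∧ BoundsClock t (nodes i).2.1 x}.Infinite ∧
    {i | ∃ t, labels i = some t ∧ x ∈ t.reset}.Finite

/-! ## Clock orders -/

/-- `Z` orders clocks. -/
def OrdersClocks {X : Type} (Z : Set (ClockVal X)) : Prop :=
  ∀ x y : X, (∀ v ∈ Z, v x ≤ v y) ∨ (∀ v ∈ Z, v y ≤ v x)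

/-- `Y` respects the order given by `Z`: it is downward closed w.r.t. it. -/
def RespectsOrder {X : Type} (Z : Set (ClockVal X)) (Y : Set X) : Prop :=
  ∀ y ∈ Y, ∀ x : X, (∀ v ∈ Z, v x ≤ v y) → x ∈ Y

/-! ## Strongly connected components -/

def StepWithin {N : Type} (Γ : Set N) (step : N → N → Prop) (a b : N) : Prop :=
  a ∈ Γ ∧ b ∈ Γ ∧ step a b

/-- `Γ` is an SCC of the graph with edge relation `step`: every node of `Γ` is
reachable from every other node of `Γ` within `Γ`. -/
def IsSCC {N : Type} (step : N → N → Prop) (Γ : Set N) : Prop :=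
  Γ.Nonempty ∧ ∀ a ∈ Γ, ∀ b ∈ Γ, Relation.ReflTransGen (StepWithin Γ step) a b

/-- `U_Γ`: clocks bounded by some transition of the SCC `Γ` of `GZG^a(A)`. -/
def GZGBoundedClocks {Q X : Type} (A : TBA Q X) (M : ℕ) (Γ : Set (GNode Q X)) : Set X :=
  {x | ∃ n ∈ Γ, ∃ n' ∈ Γ, ∃ t, GZGTrans A M (some t) n n' ∧ BoundsClock t n.2.1 x}

/-- `R_Γ`: clocks reset by some transition of the SCC `Γ` of `GZG^a(A)`. -/
def GZGResetClocks {Q X : Type} (A : TBA Q X) (M : ℕ) (Γ : Set (GNode Q X)) : Set X :=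
  {x | ∃ n ∈ Γ, ∃ n' ∈ Γ, ∃ t, GZGTrans A M (some t) n n' ∧ x ∈ t.reset}

/-! ## The strongly non-Zeno construction -/

def liftConstraint {X : Type} (c : AtomicConstraint X) : AtomicConstraint (Option X) :=
  ⟨some c.clock, c.cmp, c.bound⟩

def liftGuard {X : Type} (g : Guard X) : Guard (Option X) := g.map liftConstraint

/-- `SNZ(A)`: a fresh clock `z` (`none`) is added; every accepting state `a` is split
into an accepting copy `a1` (`Sum.inr a`) reachable only with `z ≥ 1` and resetting `z`,
and a non-accepting copy `a2` (`Sum.inl a`). -/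
def SNZ {Q X : Type} (A : TBA Q X) : TBA (Q ⊕ Q) (Option X) where
  q0 := Sum.inl A.q0
  trans :=
    {t' | ∃ t ∈ A.trans,
        t' = ⟨Sum.inl t.src, liftGuard t.guard, some '' t.reset, Sum.inl t.dst⟩} ∪
    {t' | ∃ t ∈ A.trans, t.dst ∈ A.acc ∧
        t' = ⟨Sum.inl t.src, ⟨none, CmpOp.ge, 1⟩ :: liftGuard t.guard,
              insert none (some '' t.reset), Sum.inr t.dst⟩} ∪
    {t' | ∃ a ∈ A.acc, t' = ⟨Sum.inr a, [], ∅, Sum.inl a⟩}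
  acc := Sum.inr '' A.acc

/-! ## Trapped runs and the restricted guessing zone graph -/

/-- A run of `A` is trapped in the SCC `Γ` of `ZG^a(A)`: some suffix of the run
instantiates a path lying within `Γ`. -/
def TrappedIn {Q X : Type} (A : TBA Q X) (M : ℕ) (Γ : Set (RNode Q X))
    (st : ℕ → Q × ClockVal X) (ts : ℕ → TBATrans Q X) : Prop :=
  ∃ m : ℕ, ∃ nodes : ℕ → RNode Q X,
    (∀ i, nodes i ∈ Γ) ∧
    (∀ i, SGTrans A (approxZ M) (ts (m + i)) (nodes i) (nodes (i + 1))) ∧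
    (∀ i, (st (m + i)).1 = (nodes i).1 ∧ (st (m + i)).2 ∈ (nodes i).2)

/-- Steps of `GZG^a(A)` whose endpoints project into `Γ`. -/
def GZGRestStep {Q X : Type} (A : TBA Q X) (M : ℕ) (Γ : Set (RNode Q X))
    (g g' : GNode Q X) : Prop :=
  (g.1, g.2.1) ∈ Γ ∧ (g'.1, g'.2.1) ∈ Γ ∧ GZGStep A M g g'

/-- Nodes of `GZG^a_{|Γ}(A)`: reachable from `(q^Γ, Z^Γ, X)` via steps projecting
into `Γ`. -/
def GZGRestNodes {Q X : Type} (A : TBA Q X) (M : ℕ) (Γ : Set (RNode Q X))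
    (root : RNode Q X) : Set (GNode Q X) :=
  {g | Relation.ReflTransGen (GZGRestStep A M Γ) (root.1, root.2, Set.univ) g}

namespace ZoneProof

open Filter Topology Set

/-! ### Unbounded regions in homogeneous coordinates -/

/-- `v` and `w` satisfy the same integer difference constraints between coordinates in `J`. The
classes for `J = univ` are the regions without any maximal constant, called unbounded regions. -/
def DiffEq {I : Type} (J : Set I) (v w : I → ℝ) : Prop :=
  ∀ a ∈ J, ∀ b ∈ J, ∀ c : ℤ, v a - v b ≤ c ↔ w a - w b ≤ c

lemma DiffEq.symm {I : Type} {J : Set I} {v w : I → ℝ} (h : DiffEq J v w) : DiffEq J w v :=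
  fun a ha b hb c => (h a ha b hb c).symm

lemma unit_interval_le_iff {y : ℝ} {n c : ℤ} (h1 : (n : ℝ) < y) (h2 : y < n + 1) :
    (y ≤ c ↔ n + 1 ≤ c) ∧ (-y ≤ c ↔ -n ≤ c) := by
  refine ⟨⟨fun h => ?_, fun h => ?_⟩, ⟨fun h => ?_, fun h => ?_⟩⟩
  · have : (n : ℝ) < c := lt_of_lt_of_le h1 h
    exact_mod_cast this
  · have : ((n + 1 : ℤ) : ℝ) ≤ c := by exact_mod_cast h
    push_cast at this; linarith
  · have : (-c : ℝ) < n + 1 := by linarith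
    have : (-c : ℤ) < n + 1 := by exact_mod_cast this
    omega
  · have : ((-n : ℤ) : ℝ) ≤ c := by exact_mod_cast h
    push_cast at this; linarith

/-- A further coordinate `r` can be added to a valuation and matched in any equivalent one. -/
lemma DiffEq.extend_one {I : Type} {J : Set I} (hJ : J.Finite) {v w : I → ℝ}
    (h : DiffEq J v w) (r : ℝ) :
    ∃ r' : ℝ, ∀ a ∈ J, ∀ c : ℤ,
      (v a - r ≤ c ↔ w a - r' ≤ c) ∧ (r - v a ≤ c ↔ r' - w a ≤ c) := by
  by_cases hr : ∃ b ∈ J, ∃ n : ℤ, r = v b + n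
  · obtain ⟨b, hb, n, rfl⟩ := hr
    refine ⟨w b + n, fun a ha c => ⟨?_, ?_⟩⟩
    · have := h a ha b hb (c + n)
      push_cast at this
      constructor <;> intro h' <;> [have := this.1 (by linarith); have := this.2 (by linarith)] <;>
        linarith
    · have := h b hb a ha (c - n)
      push_cast at this
      constructor <;> intro h' <;> [have := this.1 (by linarith); have := this.2 (by linarith)] <;>
        linarith
  · push Not at hr
    have hfl : ∀ a ∈ J, ((⌊r - v a⌋ : ℤ) : ℝ) < r - v a := fun a ha => by
      refine lt_of_le_of_ne (Int.floor_le _) fun he => hr a ha ⌊r - v a⌋ (by linarith)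
    obtain ⟨r', h1, h2⟩ := Order.exists_between_finsets
      (lo := hJ.toFinset.image fun a => w a + (⌊r - v a⌋ : ℤ))
      (hi := hJ.toFinset.image fun a => w a + ((⌊r - v a⌋ : ℤ) + 1 : ℝ))
      (by
        simp only [Finset.mem_image, Set.Finite.mem_toFinset]
        rintro _ ⟨a, ha, rfl⟩ _ ⟨b, hb, rfl⟩
        have hab : ¬ (w b - w a ≤ ((⌊r - v a⌋ - ⌊r - v b⌋ - 1 : ℤ) : ℝ)) := by
          rw [← h b hb a ha]
          have := hfl a ha
          have := Int.lt_floor_add_one (r - v b)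
          push_cast; intro h'; linarith
        push_cast at hab; push Not at hab; linarith)
    refine ⟨r', fun a ha c => ?_⟩
    have e1 := h1 _ (Finset.mem_image_of_mem _ (hJ.mem_toFinset.2 ha))
    have e2 := h2 _ (Finset.mem_image_of_mem _ (hJ.mem_toFinset.2 ha))
    have f := unit_interval_le_iff (c := c) (hfl a ha) (Int.lt_floor_add_one _)
    have g := unit_interval_le_iff (y := r' - w a) (n := ⌊r - v a⌋) (c := c)
      (by linarith) (by linarith)
    rw [neg_sub] at f g
    exact ⟨f.2.trans g.2.symm, f.1.trans g.1.symm⟩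

/-- Equivalence on some coordinates extends to equivalence on all of them. -/
lemma DiffEq.extend_all {I : Type} [Finite I] {J : Set I} {v w : I → ℝ} (h : DiffEq J v w) :
    ∃ w', DiffEq univ v w' ∧ ∀ a ∈ J, w' a = w a := by
  classical
  cases nonempty_fintype I
  suffices H : ∀ K : Finset I, ∃ w', DiffEq (J ∪ K) v w' ∧ ∀ a ∈ J, w' a = w a by
    obtain ⟨w', h1, h2⟩ := H Finset.univ
    exact ⟨w', by simpa using h1, h2⟩
  intro K
  induction K using Finset.induction_on with
  | empty => exact ⟨w, by simpa using h, fun _ _ => rfl⟩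
  | insert i K _ ih =>
    obtain ⟨w', h1, h2⟩ := ih
    by_cases hi : i ∈ J ∪ (K : Set I)
    · refine ⟨w', ?_, h2⟩
      have : J ∪ ((insert i K : Finset I) : Set I) = J ∪ K := by
        ext a; simp only [Finset.coe_insert, mem_union, mem_insert_iff] at hi ⊢
        constructor
        · rintro (h | rfl | h) <;> tauto
        · tauto
      rwa [this]
    · obtain ⟨r, hr⟩ := h1.extend_one (Set.toFinite _) (v i)
      refine ⟨Function.update w' i r, ?_, ?_⟩
      · have mem : ∀ a, a ∈ J ∪ ((insert i K : Finset I) : Set I) → a ≠ i → a ∈ J ∪ (K : Set I) := by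
          intro a ha hai
          simp only [Finset.coe_insert, mem_union, mem_insert_iff] at ha ⊢
          tauto
        intro a ha b hb c
        by_cases hai : a = i <;> by_cases hbi : b = i
        · subst hai; subst hbi; simp
        · subst hai; simpa [hbi] using (hr b (mem b hb hbi) c).2
        · subst hbi; simpa [hai] using (hr a (mem a ha hai) c).1
        · simpa [hai, hbi] using h1 a (mem a ha hai) b (mem b hb hbi) c
      · intro a ha
        have : a ≠ i := fun e => hi (Or.inl (e ▸ ha))
        simp [this, h2 a ha]

/-! ### Convex unions of regions are determined by pairs of coordinates -/

/-- A set of valuations that is a union of classes of `DiffEq univ`. -/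
def Saturated {I : Type} (T : Set (I → ℝ)) : Prop :=
  ∀ t ∈ T, ∀ w, DiffEq univ t w → w ∈ T

lemma Saturated.proj {I : Type} [Finite I] {T : Set (I → ℝ)} (hs : Saturated T) {J : Set I}
    {t w : I → ℝ} (ht : t ∈ T) (h : DiffEq J t w) : ∃ t' ∈ T, ∀ a ∈ J, t' a = w a := by
  obtain ⟨w', h1, h2⟩ := h.extend_all
  exact ⟨w', hs t ht w' h1, h2⟩

lemma eventually_near (α γ : ℝ) : ∀ᶠ η in 𝓝[>] (0 : ℝ),
    (⌈α⌉ : ℝ) - 1 < α + η * γ ∧ α + η * γ < ⌊α⌋ + 1 := by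
  have ht : Tendsto (fun η : ℝ => α + η * γ) (𝓝[>] 0) (𝓝 α) := by
    have : Continuous fun η : ℝ => α + η * γ := by fun_prop
    simpa using (this.tendsto 0).mono_left nhdsWithin_le_nhds
  exact (ht.eventually (lt_mem_nhds (by linarith [Int.ceil_lt_add_one α]))).and
    (ht.eventually (gt_mem_nhds (Int.lt_floor_add_one α)))

lemma eventually_ne_int (α : ℝ) {γ : ℝ} (hγ : γ ≠ 0) : ∀ᶠ η in 𝓝[>] (0 : ℝ),
    ∀ n : ℤ, α + η * γ ≠ n := by
  filter_upwards [eventually_near α γ, self_mem_nhdsWithin] with η h h0 n hn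
  have h0 : 0 < η := h0
  have hne : η * γ ≠ 0 := mul_ne_zero h0.ne' hγ
  rw [hn] at h
  have h1 : ⌈α⌉ ≤ n := by
    have : ⌈α⌉ - 1 < n := by exact_mod_cast h.1
    omega
  have h2 : n ≤ ⌊α⌋ := by
    have : n < ⌊α⌋ + 1 := by exact_mod_cast h.2
    omega
  have h3 := Int.ceil_le.1 h1
  have h4 := Int.le_floor.1 h2
  exact hne (by linarith)

lemma eventually_dir_real (α β β' : ℝ) (h : (∃ n : ℤ, α = n) → (β ≤ 0 ↔ β' ≤ 0)) :
    ∀ᶠ η in 𝓝[>] (0 : ℝ), ∀ c : ℤ, α + η * β ≤ c ↔ α + η * β' ≤ c := by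
  filter_upwards [eventually_near α β, eventually_near α β', self_mem_nhdsWithin] with η h1 h2 h0 c
  have h0 : 0 < η := h0
  by_cases hn : ∃ n : ℤ, α = n
  · obtain ⟨n, rfl⟩ := hn
    have hb := h ⟨n, rfl⟩
    simp only [Int.ceil_intCast, Int.floor_intCast] at h1 h2
    rcases lt_trichotomy c n with hc | rfl | hc
    · have : (c : ℝ) + 1 ≤ n := by exact_mod_cast hc
      constructor <;> intro <;> linarith
    · have : ∀ γ : ℝ, (c : ℝ) + η * γ ≤ c ↔ γ ≤ 0 := fun γ => by
        rw [add_le_iff_nonpos_right]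
        refine ⟨fun h => ?_, fun h => by nlinarith⟩
        by_contra hh
        nlinarith [mul_pos h0 (not_le.1 hh)]
      rw [this, this, hb]
    · have : (n : ℝ) + 1 ≤ c := by exact_mod_cast hc
      constructor <;> intro <;> linarith
  · have hlt : (⌊α⌋ : ℝ) < α :=
      lt_of_le_of_ne (Int.floor_le _) fun he => hn ⟨_, he.symm⟩
    have hce : ⌈α⌉ = ⌊α⌋ + 1 := by
      rw [Int.ceil_eq_iff]; push_cast
      exact ⟨by linarith, (Int.lt_floor_add_one α).le⟩
    rw [hce] at h1 h2; push_cast at h1 h2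
    rw [(unit_interval_le_iff (by linarith [h1.1]) h1.2).1,
      (unit_interval_le_iff (by linarith [h2.1]) h2.2).1]

/-- Two directions that agree in sign on the difference constraints active at `z` lead from `z`
into the same region. -/
lemma eventually_dir {I : Type} {J : Set I} (hJ : J.Finite) (z v v' : I → ℝ)
    (h : ∀ a ∈ J, ∀ b ∈ J, (∃ n : ℤ, z a - z b = n) → (v a - v b ≤ 0 ↔ v' a - v' b ≤ 0)) :
    ∀ᶠ η in 𝓝[>] (0 : ℝ), DiffEq J (z + η • v) (z + η • v') := by
  unfold DiffEq
  rw [eventually_all_finite hJ]; intro a ha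
  rw [eventually_all_finite hJ]; intro b hb
  filter_upwards [eventually_dir_real _ _ _ (h a ha b hb)] with η hη c
  have := hη c
  simp only [Pi.add_apply, Pi.smul_apply, smul_eq_mul]
  rw [show z a + η * v a - (z b + η * v b) = z a - z b + η * (v a - v b) by ring,
    show z a + η * v' a - (z b + η * v' b) = z a - z b + η * (v' a - v' b) by ring]
  exact this

/-- For generic `q`: if `q` agrees on `J` with a point of `T` that is larger at `i`, and no
difference constraint `t i - t k ≥ c` separates `q` from `T`, then `q` agrees with a point of `T`
on `insert i J`. The infimum of the possible values at `i` would otherwise give a facet of `T`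
carried by such a constraint. -/
lemma agree_insert_of_lt {I : Type} [Finite I] [DecidableEq I] {T : Set (I → ℝ)}
    (hc : Convex ℝ T) (hs : Saturated T) {J : Finset I} {i : I} (hi : i ∉ J) {q : I → ℝ}
    (hgen : ∀ a ∈ J, ∀ b ∈ J, a ≠ b → ∀ n : ℤ, q a - q b ≠ n)
    {t₀ : I → ℝ} (ht₀ : t₀ ∈ T) (hag : ∀ a ∈ J, t₀ a = q a) (hlt : q i < t₀ i)
    (hH : ∀ k ∈ J, ∃ t ∈ T, t i - t k < q i - q k) :
    ∃ t ∈ T, ∀ a ∈ insert i J, t a = q a := by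
  classical
  by_contra hcon
  let J' : Set I := ((insert i J : Finset I) : Set I)
  have hJ' : J'.Finite := Finset.finite_toSet _
  let Pr : (I → ℝ) → Prop := fun w => ∃ t ∈ T, ∀ a ∈ J', t a = w a
  have hPs : ∀ w w', Pr w → DiffEq J' w w' → Pr w' := by
    rintro w w' ⟨t, ht, hw⟩ hd
    refine hs.proj ht fun a ha b hb c => ?_
    rw [hw a ha, hw b hb]; exact hd a ha b hb c
  have hPc : ∀ w w', Pr w → Pr w' → ∀ α β : ℝ, 0 ≤ α → 0 ≤ β → α + β = 1 →
      Pr (α • w + β • w') := by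
    rintro w w' ⟨t, ht, hw⟩ ⟨t', ht', hw'⟩ α β h1 h2 h3
    refine ⟨_, hc ht ht' h1 h2 h3, fun a ha => ?_⟩
    simp [hw a ha, hw' a ha]
  have hPT : ∀ t ∈ T, Pr t := fun t ht => ⟨t, ht, fun _ _ => rfl⟩
  let p : ℝ → I → ℝ := fun r => Function.update q i r
  have hpi : ∀ r, p r i = r := fun r => by simp [p]
  have hpJ : ∀ r, ∀ a ∈ J, p r a = q a := fun r a ha => by
    have : a ≠ i := fun e => hi (e ▸ ha)
    simp [p, this]
  have hpc : ∀ r s α β : ℝ, α + β = 1 → α • p r + β • p s = p (α * r + β * s) := by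
    intro r s α β h
    funext a
    by_cases ha : a = i
    · subst ha; simp [p]
    · simp only [Pi.add_apply, Pi.smul_apply, smul_eq_mul, p, Function.update_of_ne ha]
      rw [← add_mul, h, one_mul]
  let G : Set ℝ := {r | Pr (p r)}
  have hGc : Convex ℝ G := by
    intro r hr s hs' α β h1 h2 h3
    have := hPc _ _ hr hs' α β h1 h2 h3
    rw [hpc _ _ _ _ h3] at this
    exact this
  have hG0 : t₀ i ∈ G := by
    refine ⟨t₀, ht₀, fun a ha => ?_⟩
    rcases Finset.mem_insert.1 ha with rfl | ha
    · rw [hpi]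
    · rw [hpJ _ _ ha, hag _ ha]
  have hqi : q i ∉ G := fun h => hcon (by
    obtain ⟨t, ht, h⟩ := h
    exact ⟨t, ht, fun a ha => by simpa [p] using h a ha⟩)
  have hlow : ∀ r ∈ G, q i ≤ r := by
    intro r hr
    by_contra h
    exact hqi (hGc.ordConnected.out hr hG0 ⟨(not_le.1 h).le, hlt.le⟩)
  have hbdd : BddBelow G := ⟨q i, hlow⟩
  set ρ := sInf G with hρ
  have hqρ : q i ≤ ρ := le_csInf ⟨_, hG0⟩ hlow
  let z := p ρ
  let e : I → ℝ := Pi.single i 1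
  have hze : ∀ η : ℝ, z + η • e = p (ρ + η) := by
    intro η; funext a
    by_cases ha : a = i
    · subst ha; simp [z, p, e]
    · simp [z, p, e, ha]
  -- A point of `T` on the far side of every constraint active at `z`.
  obtain ⟨t, ht, hact⟩ : ∃ t ∈ T, ∀ k ∈ J, (∃ n : ℤ, ρ - q k = n) → t i - t k < ρ - q k := by
    by_cases hk : ∃ k ∈ J, ∃ n : ℤ, ρ - q k = n
    · obtain ⟨k, hkJ, n, hn⟩ := hk
      obtain ⟨t, ht, htk⟩ := hH k hkJ
      refine ⟨t, ht, fun k' hk' ⟨n', hn'⟩ => ?_⟩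
      have : k' = k := by
        by_contra hne
        refine hgen k' hk' k hkJ hne (n - n') ?_
        push_cast; linarith
      subst this; linarith
    · exact ⟨t₀, ht₀, fun k hk' hn => absurd ⟨k, hk', hn⟩ hk⟩
  have hsign : ∀ a ∈ J', ∀ b ∈ J', (∃ n : ℤ, z a - z b = n) →
      (((z - t) a - (z - t) b ≤ 0 ↔ e a - e b ≤ 0) ∧
        ((t - z) a - (t - z) b ≤ 0 ↔ (-e) a - (-e) b ≤ 0)) := by
    intro a haJ b hbJ hn
    have hJ1 : ∀ k ∈ J, z k = q k := hpJ ρ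
    have hz1 : z i = ρ := hpi ρ
    have hek : ∀ k ∈ J, e k = 0 := fun k hk => by
      have : k ≠ i := fun h => hi (h ▸ hk)
      simp [e, this]
    have hei : e i = 1 := by simp [e]
    simp only [Pi.sub_apply, Pi.neg_apply]
    rcases Finset.mem_insert.1 haJ with rfl | ha <;> rcases Finset.mem_insert.1 hbJ with rfl | hb
    · simp
    · rw [hz1, hJ1 b hb] at hn
      have := hact b hb hn
      rw [hz1, hJ1 b hb, hei, hek b hb]
      constructor <;> constructor <;> intro <;> linarith
    · rw [hz1, hJ1 a ha] at hn
      obtain ⟨n, hn⟩ := hn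
      have := hact a ha ⟨-n, by push_cast; linarith⟩
      rw [hz1, hJ1 a ha, hei, hek a ha]
      constructor <;> constructor <;> intro <;> linarith
    · by_cases hab : a = b
      · subst hab; simp
      · rw [hJ1 a ha, hJ1 b hb] at hn
        obtain ⟨n, hn⟩ := hn
        exact absurd hn (hgen a ha b hb hab n)
  have hpos : ∀ᶠ η in 𝓝[>] (0 : ℝ), 0 < η := self_mem_nhdsWithin
  have hone : ∀ᶠ η in 𝓝[>] (0 : ℝ), η < 1 :=
    nhdsWithin_le_nhds (gt_mem_nhds one_pos)
  by_cases hρG : ρ ∈ G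
  · have h1 := eventually_dir hJ' z (t - z) (-e) fun a ha b hb hn => (hsign a ha b hb hn).2
    obtain ⟨η, hη, h0, h1'⟩ := (h1.and (hpos.and hone)).exists
    have h2 : Pr (z + η • (t - z)) := by
      have := hPc z t hρG (hPT t ht) (1 - η) η (by linarith) h0.le (by ring)
      convert this using 1
      funext a; simp; ring
    have h3 := hPs _ _ h2 hη
    rw [smul_neg, ← neg_smul, hze] at h3
    have := csInf_le hbdd (show ρ + -η ∈ G from h3)
    rw [← hρ] at this
    linarith
  · have hGt : ∀ᶠ η in 𝓝[>] (0 : ℝ), ρ + η ∈ G := by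
      have hρ0 : ρ < t₀ i := lt_of_le_of_ne (csInf_le hbdd hG0) fun h => hρG (h ▸ hG0)
      have : ∀ᶠ η in 𝓝[>] (0 : ℝ), η < t₀ i - ρ :=
        nhdsWithin_le_nhds (gt_mem_nhds (by linarith))
      filter_upwards [this, hpos] with η h1 h2
      obtain ⟨g, hg, hg'⟩ := exists_lt_of_csInf_lt ⟨_, hG0⟩ (show sInf G < ρ + η by linarith)
      exact hGc.ordConnected.out hg hG0 ⟨hg'.le, by linarith⟩
    have h1 := eventually_dir hJ' z (z - t) e fun a ha b hb hn => (hsign a ha b hb hn).1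
    obtain ⟨η, hη, h0, h2⟩ := (h1.and (hpos.and hGt)).exists
    have h3 : Pr (z + η • (z - t)) := hPs _ _ (by rw [hze]; exact h2) hη.symm
    have hne : (1 + η) ≠ 0 := by positivity
    have h4 := hPc _ _ h3 (hPT t ht) (1 / (1 + η)) (η / (1 + η)) (by positivity) (by positivity)
      (by field_simp)
    apply hρG
    show Pr z
    convert h4 using 1
    funext a; simp; field_simp; ring

lemma Saturated.neg {I : Type} {T : Set (I → ℝ)} (hs : Saturated T) :
    Saturated {w | -w ∈ T} := by
  intro t ht w hw
  refine hs _ ht _ fun a _ b _ c => ?_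
  have := hw b trivial a trivial c
  simp only [Pi.neg_apply]
  rw [show -t a - -t b = t b - t a by ring, show -w a - -w b = w b - w a by ring]
  exact this

/-- A convex union of regions is determined by its strict difference constraints: if no constraint
on a difference `t a - t b` with `a, b ∈ J` weakly separates `q` from `T`, then `q` agrees on `J`
with some point of `T`. -/
lemma agree_on {I : Type} [Finite I] [DecidableEq I] {T : Set (I → ℝ)}
    (hc : Convex ℝ T) (hs : Saturated T) (hne : T.Nonempty) (J : Finset I) :
    ∀ q : I → ℝ, (∀ a ∈ J, ∀ b ∈ J, a ≠ b → ∃ t ∈ T, q a - q b < t a - t b) →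
      ∃ t ∈ T, ∀ a ∈ J, t a = q a := by
  induction J using Finset.induction_on with
  | empty => exact fun q _ => hne.imp fun t ht => ⟨ht, by simp⟩
  | insert i J hi ih =>
    have gen : ∀ q : I → ℝ,
        (∀ a ∈ insert i J, ∀ b ∈ insert i J, a ≠ b → ∀ n : ℤ, q a - q b ≠ n) →
        (∀ a ∈ insert i J, ∀ b ∈ insert i J, a ≠ b → ∃ t ∈ T, q a - q b < t a - t b) →
        ∃ t ∈ T, ∀ a ∈ insert i J, t a = q a := by
      intro q hg hH
      have mi : i ∈ insert i J := Finset.mem_insert_self _ _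
      have mJ : ∀ {k}, k ∈ J → k ∈ insert i J := fun h => Finset.mem_insert_of_mem h
      have ne : ∀ {k}, k ∈ J → k ≠ i := fun h e => hi (e ▸ h)
      obtain ⟨t₀, ht₀, hag⟩ := ih q fun a ha b hb => hH a (mJ ha) b (mJ hb)
      rcases lt_trichotomy (t₀ i) (q i) with hlt | heq | hlt
      · obtain ⟨t, ht, h⟩ := agree_insert_of_lt (T := {w | -w ∈ T}) (q := -q) (t₀ := -t₀) (J := J)
          (i := i) hc.neg hs.neg hi
          (fun a ha b hb hab n hn => hg b (mJ hb) a (mJ ha) hab.symm n (by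
            simp only [Pi.neg_apply] at hn; linarith))
          (by simpa using ht₀) (fun a ha => by simp [hag a ha]) (by simpa using hlt)
          (fun k hk => by
            obtain ⟨t, ht, h⟩ := hH i mi k (mJ hk) (ne hk).symm
            exact ⟨-t, by simpa using ht, by simp only [Pi.neg_apply]; linarith⟩)
        exact ⟨-t, ht, fun a ha => by simp [h a ha]⟩
      · refine ⟨t₀, ht₀, fun a ha => ?_⟩
        rcases Finset.mem_insert.1 ha with rfl | ha
        exacts [heq, hag a ha]
      · exact agree_insert_of_lt hc hs hi (fun a ha b hb => hg a (mJ ha) b (mJ hb)) ht₀ hag hlt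
          (fun k hk => by
            obtain ⟨t, ht, h⟩ := hH k (mJ hk) i mi (ne hk)
            exact ⟨t, ht, by linarith⟩)
    intro q hH
    -- A general `q` is the midpoint of two generic points `q ± η v`.
    obtain ⟨n, ⟨e⟩⟩ := Finite.exists_equiv_fin I
    let v : I → ℝ := fun a => ((e a : ℕ) : ℝ)
    have hv : ∀ a b, a ≠ b → v a - v b ≠ 0 := by
      intro a b hab h
      refine hab (e.injective (Fin.ext ?_))
      have : ((e a : ℕ) : ℝ) = (e b : ℕ) := by simpa [v] using sub_eq_zero.1 h
      exact_mod_cast this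
    have hev : ∀ σ : ℝ, σ ≠ 0 → ∀ᶠ η in 𝓝[>] (0 : ℝ), ∃ t ∈ T, ∀ a ∈ insert i J,
        t a = q a + η * (σ * v a) := by
      intro σ hσ
      have h1 : ∀ᶠ η in 𝓝[>] (0 : ℝ), ∀ a ∈ insert i J, ∀ b ∈ insert i J, a ≠ b →
          (∀ n : ℤ, q a - q b + η * (σ * (v a - v b)) ≠ n) ∧
            ∃ t ∈ T, q a - q b + η * (σ * (v a - v b)) < t a - t b := by
        rw [Finset.eventually_all]; intro a ha
        rw [Finset.eventually_all]; intro b hb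
        by_cases hab : a = b
        · simp [hab]
        · obtain ⟨t, ht, hlt⟩ := hH a ha b hb hab
          have hlim : Tendsto (fun η : ℝ => q a - q b + η * (σ * (v a - v b))) (𝓝[>] 0)
              (𝓝 (q a - q b)) := by
            have : Continuous fun η : ℝ => q a - q b + η * (σ * (v a - v b)) := by fun_prop
            simpa using (this.tendsto 0).mono_left nhdsWithin_le_nhds
          filter_upwards [eventually_ne_int (q a - q b) (mul_ne_zero hσ (hv a b hab)),
            hlim.eventually (gt_mem_nhds hlt)] with η g1 g2 _
          exact ⟨g1, t, ht, g2⟩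
      filter_upwards [h1] with η hη
      have e : ∀ a b, q a + η * (σ * v a) - (q b + η * (σ * v b)) =
          q a - q b + η * (σ * (v a - v b)) := fun a b => by ring
      refine gen (fun a => q a + η * (σ * v a)) ?_ ?_
      · intro a ha b hb hab n; rw [e]; exact (hη a ha b hb hab).1 n
      · intro a ha b hb hab; rw [e]; exact (hη a ha b hb hab).2
    obtain ⟨η, ⟨t, ht, h⟩, t', ht', h'⟩ := ((hev 1 one_ne_zero).and
      (hev (-1) (by norm_num))).exists
    refine ⟨_, hc ht ht' (a := 1 / 2) (b := 1 / 2) (by norm_num) (by norm_num) (by norm_num),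
      fun a ha => ?_⟩
    simp only [Pi.add_apply, Pi.smul_apply, smul_eq_mul, h a ha, h' a ha]
    ring

/-- Selects one coordinate from each class of coordinates whose differences are frozen on `T`. -/
lemma exists_representatives {I : Type} [DecidableEq I] {T : Set (I → ℝ)} (q : I → ℝ)
    (J : Finset I)
    (H : ∀ a ∈ J, ∀ b ∈ J, (∃ t ∈ T, q a - q b < t a - t b) ∨
      ∀ t ∈ T, t a - t b = q a - q b) :
    ∃ J' ⊆ J, (∀ a ∈ J', ∀ b ∈ J', a ≠ b → ∃ t ∈ T, q a - q b < t a - t b) ∧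
      ∀ j ∈ J, ∃ k ∈ J', ∀ t ∈ T, t j - t k = q j - q k := by
  induction J using Finset.induction_on with
  | empty => exact ⟨∅, by simp, by simp, by simp⟩
  | insert i J hi ih =>
    have mi : i ∈ insert i J := Finset.mem_insert_self _ _
    have mJ : ∀ {k}, k ∈ J → k ∈ insert i J := fun h => Finset.mem_insert_of_mem h
    obtain ⟨J', hJ', h1, h2⟩ := ih fun a ha b hb => H a (mJ ha) b (mJ hb)
    by_cases hk : ∃ k ∈ J', ∀ t ∈ T, t i - t k = q i - q k
    · refine ⟨J', hJ'.trans (Finset.subset_insert _ _), h1, fun j hj => ?_⟩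
      rcases Finset.mem_insert.1 hj with rfl | hj
      exacts [hk, h2 j hj]
    · refine ⟨insert i J', Finset.insert_subset_insert _ hJ', ?_, ?_⟩
      · intro a ha b hb hab
        rcases Finset.mem_insert.1 ha with rfl | ha' <;> rcases Finset.mem_insert.1 hb with rfl | hb'
        · exact absurd rfl hab
        · exact (H a mi b (mJ (hJ' hb'))).resolve_right fun h => hk ⟨b, hb', h⟩
        · refine (H a (mJ (hJ' ha')) b mi).resolve_right fun h => hk ⟨a, ha', fun t ht => ?_⟩
          linarith [h t ht]
        · exact h1 a ha' b hb' hab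
      · intro j hj
        rcases Finset.mem_insert.1 hj with rfl | hj
        · exact ⟨j, Finset.mem_insert_self _ _, fun _ _ => by simp⟩
        · obtain ⟨k, hk, h⟩ := h2 j hj
          exact ⟨k, Finset.mem_insert_of_mem hk, h⟩

/-- Helly-type statement for finitely many half-lines. -/
lemma exists_mem_rays {ι κ : Type} (A : Finset ι) (B : Finset κ) (hA : A.Nonempty)
    (hB : B.Nonempty) (L : ι → Set ℝ) (U : κ → Set ℝ) (hL : ∀ i, IsLowerSet (L i))
    (hU : ∀ j, IsUpperSet (U j)) (h : ∀ i ∈ A, ∀ j ∈ B, ∃ r, r ∈ L i ∧ r ∈ U j) :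
    ∃ r, (∀ i ∈ A, r ∈ L i) ∧ ∀ j ∈ B, r ∈ U j := by
  choose! r hr using h
  obtain ⟨i₀, hi₀, hmin⟩ := A.exists_min_image (fun i => B.sup' hB (r i)) hA
  refine ⟨B.sup' hB (r i₀), fun i hi => ?_, fun j hj => ?_⟩
  · refine hL i (hmin i hi) ?_
    obtain ⟨j, hj, he⟩ := B.exists_mem_eq_sup' hB (r i)
    rw [he]; exact (hr i hi j hj).1
  · exact hU j (Finset.le_sup' (r i₀) hj) (hr i₀ hi₀ j hj).2

/-- As `agree_on`, with the extra demand that the coordinates in `U` exceed `κ`. -/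
lemma agree_on_and_large {I : Type} [Finite I] [DecidableEq I] {T : Set (I → ℝ)}
    (hc : Convex ℝ T) (hs : Saturated T) (hne : T.Nonempty) (κ : ℝ) (U : Finset I) :
    ∀ (J : Finset I) (q : I → ℝ), J.Nonempty →
      (∀ a ∈ J, ∀ b ∈ J, a ≠ b → ∃ t ∈ T, q a - q b < t a - t b) →
      (∀ u ∈ U, ∀ a ∈ J, ∃ t ∈ T, κ < q a + t u - t a) →
      ∃ t ∈ T, (∀ a ∈ J, t a = q a) ∧ ∀ u ∈ U, κ < t u := by
  induction U using Finset.induction_on with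
  | empty =>
    intro J q _ hH _
    obtain ⟨t, ht, h⟩ := agree_on hc hs hne J q hH
    exact ⟨t, ht, h, by simp⟩
  | insert u U hu ih =>
    intro J q hJ hH hI
    have mu : u ∈ insert u U := Finset.mem_insert_self _ _
    by_cases hk : ∃ a ∈ J, ∀ t ∈ T, ∀ s ∈ T, t u - t a = s u - s a
    · obtain ⟨a, ha, hconst⟩ := hk
      obtain ⟨t, ht, h1, h2⟩ := ih J q hJ hH fun u' hu' => hI u' (Finset.mem_insert_of_mem hu')
      refine ⟨t, ht, h1, fun u' hu' => ?_⟩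
      rcases Finset.mem_insert.1 hu' with rfl | hu'
      · obtain ⟨s, hsT, hlt⟩ := hI u' mu a ha
        have := hconst t ht s hsT
        have := h1 a ha
        linarith
      · exact h2 u' hu'
    · push Not at hk
      have huJ : u ∉ J := fun h => by
        obtain ⟨t, _, s, _, h⟩ := hk u h
        simp at h
      obtain ⟨r, hr1, hr2⟩ := exists_mem_rays J (J.disjSum (insert u U)) hJ
        (by obtain ⟨a, ha⟩ := hJ; exact ⟨Sum.inl a, by simpa using ha⟩)
        (fun a => {r | ∃ t ∈ T, r - q a < t u - t a})
        (Sum.elim (fun b => {r | ∃ t ∈ T, q b - r < t b - t u})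
          (fun u' => {r | ∃ t ∈ T, κ < r + t u' - t u}))
        (by
          rintro a r s hrs ⟨t, ht, h⟩
          exact ⟨t, ht, by linarith⟩)
        (by
          rintro (b | u') r s hrs ⟨t, ht, h⟩
          · exact ⟨t, ht, by linarith⟩
          · exact ⟨t, ht, by linarith⟩)
        (by
          intro a ha j hj
          simp only [Finset.mem_disjSum] at hj
          rcases hj with ⟨b, hb, rfl⟩ | ⟨u', hu', rfl⟩
          · simp only [Sum.elim_inl, mem_ofPred_eq]
            by_cases hab : b = a
            · subst hab
              obtain ⟨t, ht, s, hsT, h⟩ := hk b ha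
              rcases lt_or_gt_of_ne h with h | h
              · exact ⟨q b + ((t u - t b) + (s u - s b)) / 2, ⟨s, hsT, by linarith⟩,
                  ⟨t, ht, by linarith⟩⟩
              · exact ⟨q b + ((t u - t b) + (s u - s b)) / 2, ⟨t, ht, by linarith⟩,
                  ⟨s, hsT, by linarith⟩⟩
            · obtain ⟨t, ht, h⟩ := hH b hb a ha hab
              exact ⟨(q b + t u - t b + (q a + t u - t a)) / 2, ⟨t, ht, by linarith⟩,
                ⟨t, ht, by linarith⟩⟩
          · simp only [Sum.elim_inr, mem_ofPred_eq]
            obtain ⟨t, ht, h⟩ := hI u' hu' a ha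
            exact ⟨(κ - t u' + t u + (q a + t u - t a)) / 2, ⟨t, ht, by linarith⟩,
              ⟨t, ht, by linarith⟩⟩)
      have hb : ∀ b ∈ J, ∃ t ∈ T, q b - r < t b - t u := fun b hb =>
        hr2 (Sum.inl b) (by simpa using hb)
      have hl : ∀ u' ∈ insert u U, ∃ t ∈ T, κ < r + t u' - t u := fun u' hu' =>
        hr2 (Sum.inr u') (by simpa using hu')
      have hq : ∀ a ∈ J, Function.update q u r a = q a := fun a ha => by
        have : a ≠ u := fun h => huJ (h ▸ ha)
        simp [this]
      have hqu : Function.update q u r u = r := by simp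
      obtain ⟨t, ht, h1, h2⟩ := ih (insert u J) (Function.update q u r) (by simp)
        (by
          intro a ha b hb' hab
          rcases Finset.mem_insert.1 ha with rfl | ha' <;>
            rcases Finset.mem_insert.1 hb' with rfl | hb''
          · exact absurd rfl hab
          · rw [hqu, hq b hb'']; exact hr1 b hb''
          · rw [hqu, hq a ha']; exact hb a ha'
          · rw [hq a ha', hq b hb'']; exact hH a ha' b hb'' hab)
        (by
          intro u' hu' a ha
          rcases Finset.mem_insert.1 ha with rfl | ha'
          · rw [hqu]; exact hl u' (Finset.mem_insert_of_mem hu')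
          · rw [hq a ha']; exact hI u' (Finset.mem_insert_of_mem hu') a ha')
      refine ⟨t, ht, fun a ha => ?_, fun u' hu' => ?_⟩
      · rw [h1 a (Finset.mem_insert_of_mem ha), hq a ha]
      · rcases Finset.mem_insert.1 hu' with rfl | hu'
        · rw [h1 u' (Finset.mem_insert_self _ _), hqu]
          obtain ⟨s, _, h⟩ := hl u' mu
          linarith
        · exact h2 u' hu'

/-! ### Valuations in homogeneous coordinates -/

/-- A valuation with an additional coordinate `none`, the constant clock `0`; single-clock
constraints become difference constraints. -/
def hom {Y : Type} (v : ClockVal Y) : Option Y → ℝ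
  | none => 0
  | some y => v y

@[simp] lemma hom_none {Y : Type} (v : ClockVal Y) : hom v none = 0 := rfl

@[simp] lemma hom_some {Y : Type} (v : ClockVal Y) (y : Y) : hom v (some y) = v y := rfl

lemma hom_nonneg {Y : Type} (v : ClockVal Y) (a : Option Y) : 0 ≤ hom v a := by
  cases a <;> simp

lemma hom_lin {Y : Type} {u w z : ClockVal Y} {α β : ℝ}
    (h : ∀ x, (z x : ℝ) = α * u x + β * w x) (a : Option Y) :
    hom z a = α * hom u a + β * hom w a := by
  cases a <;> simp [h]

lemma exists_val {Y : Type} (f : Y → ℝ) (hf : ∀ y, 0 ≤ f y) :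
    ∃ v : ClockVal Y, ∀ y, (v y : ℝ) = f y :=
  ⟨fun y => ⟨f y, hf y⟩, fun _ => rfl⟩

lemma val_ext {Y : Type} {v w : ClockVal Y} (h : ∀ y, (v y : ℝ) = w y) : v = w :=
  funext fun y => NNReal.coe_injective (h y)

lemma ConvexVal.mem {Y : Type} {S : Set (ClockVal Y)} (h : ConvexVal S) {u w z : ClockVal Y}
    (hu : u ∈ S) (hw : w ∈ S) {θ : ℝ} (h0 : 0 ≤ θ) (h1 : θ ≤ 1)
    (hz : ∀ x, (z x : ℝ) = θ * u x + (1 - θ) * w x) : z ∈ S := by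
  lift θ to NNReal using h0
  have hle : θ ≤ 1 := by exact_mod_cast h1
  have := h u hu w hw θ hle
  convert this using 1
  refine val_ext fun y => ?_
  rw [hz]; push_cast [NNReal.coe_sub hle]; rfl

lemma ConvexVal.exists_mem {Y : Type} {S : Set (ClockVal Y)} (h : ConvexVal S)
    {u w : ClockVal Y} (hu : u ∈ S) (hw : w ∈ S) {θ : ℝ} (h0 : 0 ≤ θ) (h1 : θ ≤ 1) :
    ∃ z ∈ S, ∀ x, (z x : ℝ) = θ * u x + (1 - θ) * w x := by
  have h1' : 0 ≤ 1 - θ := by linarith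
  obtain ⟨z, hz⟩ := exists_val (fun x => θ * (u x : ℝ) + (1 - θ) * w x) fun x => by positivity
  exact ⟨z, ConvexVal.mem h hu hw h0 h1 hz, hz⟩

lemma convexVal_of {Y : Type} {S : Set (ClockVal Y)}
    (h : ∀ u ∈ S, ∀ w ∈ S, ∀ θ : ℝ, 0 ≤ θ → θ ≤ 1 → ∀ z : ClockVal Y,
      (∀ x, (z x : ℝ) = θ * u x + (1 - θ) * w x) → z ∈ S) : ConvexVal S := by
  intro u hu w hw θ hθ
  refine h u hu w hw θ θ.2 (by exact_mod_cast hθ) _ fun x => ?_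
  push_cast [NNReal.coe_sub hθ]; rfl

/-- `T` is a union of unbounded regions. -/
def ESat {Y : Type} (T : Set (ClockVal Y)) : Prop :=
  ∀ v ∈ T, ∀ v', DiffEq univ (hom v) (hom v') → v' ∈ T

/-- `T` in homogeneous coordinates, closed under adding a common constant to all coordinates. -/
def homSet {Y : Type} (T : Set (ClockVal Y)) : Set (Option Y → ℝ) :=
  {w | ∃ v ∈ T, ∀ a, w a - w none = hom v a}

lemma hom_mem_homSet {Y : Type} {T : Set (ClockVal Y)} {v : ClockVal Y} (hv : v ∈ T) :
    hom v ∈ homSet T := ⟨v, hv, by simp⟩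

lemma homSet_sub {Y : Type} {w : Option Y → ℝ} {v : ClockVal Y}
    (h : ∀ a, w a - w none = hom v a) (a b : Option Y) : w a - w b = hom v a - hom v b := by
  rw [← h a, ← h b]; ring

lemma saturated_homSet {Y : Type} {T : Set (ClockVal Y)} (hT : ESat T) :
    Saturated (homSet T) := by
  rintro w ⟨v, hv, hw⟩ w' hd
  obtain ⟨v', hv'⟩ := exists_val (fun y => w' (some y) - w' none) fun y => by
    have h1 : w none - w (some y) ≤ (0 : ℤ) := by
      rw [homSet_sub hw]; simp
    have := (hd none trivial (some y) trivial 0).1 h1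
    push_cast at this; linarith
  have hw' : ∀ a, w' a - w' none = hom v' a := by
    rintro (_ | y)
    · simp
    · simp [hv']
  refine ⟨v', hT v hv v' fun a _ b _ c => ?_, hw'⟩
  rw [← homSet_sub hw, ← homSet_sub hw']
  exact hd a trivial b trivial c

lemma convex_homSet {Y : Type} {T : Set (ClockVal Y)} (hT : ConvexVal T) :
    Convex ℝ (homSet T) := by
  rintro w ⟨v, hv, hw⟩ w' ⟨v', hv', hw'⟩ α β hα hβ hαβ
  obtain ⟨z, hz, hzx⟩ := ConvexVal.exists_mem hT hv hv' hα (by linarith)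
  refine ⟨z, hz, fun a => ?_⟩
  rw [hom_lin hzx, ← hw, ← hw']
  simp only [Pi.add_apply, Pi.smul_apply, smul_eq_mul]
  rw [show 1 - α = β by linarith]; ring

/-- On a union of unbounded regions, an upper bound on a difference can be rounded down to
an integer. -/
lemma ESat.le_floor {Y : Type} [Finite Y] {T : Set (ClockVal Y)} (hT : ESat T) {a b : Option Y}
    {α : ℝ} (h : ∀ t ∈ T, hom t a - hom t b ≤ α) :
    ∀ t ∈ T, hom t a - hom t b ≤ (⌊α⌋ : ℤ) := by
  classical
  intro t ht
  by_contra hlt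
  push Not at hlt
  have hα := Int.lt_floor_add_one α
  have hab : a ≠ b := by
    rintro rfl
    have := h t ht
    simp only [sub_self] at this hlt
    exact absurd (Int.floor_nonneg.2 this) (by exact_mod_cast not_le.2 hlt)
  have hle := h t ht
  let β : ℝ := (α + (⌊α⌋ + 1)) / 2
  let w : Option Y → ℝ := Function.update (fun _ => 0) a β
  have hwa : w a = β := by simp [w]
  have hwb : w b = 0 := by simp [w, hab.symm]
  have hd : DiffEq {a, b} (hom t) w := by
    have f1 := fun c : ℤ => unit_interval_le_iff (c := c) hlt (lt_of_le_of_lt hle hα)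
    have f2 := fun c : ℤ => unit_interval_le_iff (y := w a - w b) (n := ⌊α⌋) (c := c)
      (by rw [hwa, hwb]; simp only [β]; linarith) (by rw [hwa, hwb]; simp only [β]; linarith)
    rintro i (rfl | rfl) j (rfl | rfl) c
    · simp
    · rw [(f1 c).1, (f2 c).1]
    · have f1 := (f1 c).2
      have f2 := (f2 c).2
      rw [neg_sub] at f1 f2
      rw [f1, f2]
    · simp
  obtain ⟨w', ⟨t', ht', hw'⟩, h2⟩ := (saturated_homSet hT).proj (hom_mem_homSet ht) hd
  have := h t' ht'
  rw [← homSet_sub hw', h2 a (by simp), h2 b (by simp), hwa, hwb] at this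
  simp only [β] at this
  linarith

/-- Region equivalence up to `M`, phrased by difference constraints between the bounded
coordinates. -/
def REq {Y : Type} (M : ℕ) (v w : ClockVal Y) : Prop :=
  (∀ a, hom v a ≤ M ↔ hom w a ≤ M) ∧ DiffEq {a | hom v a ≤ M} (hom v) (hom w)

/-- The difference constraints `· a - · b ≤ c` that respect diagonal region equivalence. -/
def Valid {Y : Type} (M : ℕ) (a b : Option Y) (c : ℤ) : Prop :=
  |c| ≤ M ∧ (a = none ∨ b = none ∨ |c| < M)

lemma Valid.swap {Y : Type} {M : ℕ} {a b : Option Y} {c : ℤ} (h : Valid M a b c) :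
    Valid M b a (-c) := by
  unfold Valid at *; rw [abs_neg]; tauto

lemma dRegEquiv_iff {Y : Type} (M : ℕ) (v v' : ClockVal Y) :
    DRegEquiv M v v' ↔ ∀ a b c, Valid M a b c →
      (hom v a - hom v b ≤ c ↔ hom v' a - hom v' b ≤ c) := by
  constructor
  · rintro ⟨h1, h2⟩ a b c ⟨hc, hv⟩
    have hcM := abs_le.1 hc
    have hcM1 : (c : ℝ) ≤ M := by exact_mod_cast hcM.2
    have hcM2 : (-M : ℝ) ≤ c := by exact_mod_cast hcM.1
    have key : ∀ w : ℝ, w ≤ c ↔ ⌊w⌋ < c ∨ (⌊w⌋ = c ∧ Int.fract w = 0) := by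
      intro w
      have hw := Int.floor_add_fract w
      have hf := Int.fract_nonneg w
      constructor
      · intro h
        rcases lt_or_eq_of_le (Int.floor_mono h) with h' | h'
        · exact Or.inl (by simpa using h')
        · rw [Int.floor_intCast] at h'
          refine Or.inr ⟨h', le_antisymm ?_ hf⟩
          rw [h'] at hw; linarith
      · rintro (h | ⟨h, h'⟩)
        · have : ⌊w⌋ + 1 ≤ c := h
          have : ((⌊w⌋ : ℤ) : ℝ) + 1 ≤ c := by exact_mod_cast this
          linarith [Int.lt_floor_add_one w]
        · rw [h, h'] at hw; linarith
    rcases a with _ | x <;> rcases b with _ | y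
    · simp
    · obtain ⟨e1, e2, e3⟩ := h1 y
      simp only [hom_none, hom_some, zero_sub]
      by_cases hy : (v y : ℝ) ≤ M
      · rw [neg_le, neg_le (a := (v' y : ℝ))]
        have : ∀ w : ℝ, -(c : ℝ) ≤ w ↔ -c ≤ ⌊w⌋ := fun w => by
          rw [Int.le_floor]; push_cast; rfl
        rw [this, this, e2 hy]
      · have hy' := e1.1 (not_le.1 hy)
        push Not at hy
        constructor <;> intro <;> linarith
    · obtain ⟨e1, e2, e3⟩ := h1 x
      simp only [hom_none, hom_some, sub_zero]
      by_cases hx : (v x : ℝ) ≤ M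
      · rw [key, key, e2 hx, e3 hx]
      · have hx' := e1.1 (not_le.1 hx)
        push Not at hx
        constructor <;> intro <;> linarith
    · have hv : |c| < M := by simpa using hv
      have := abs_lt.1 hv
      exact h2 x y c this.1 this.2
  · intro h
    have up : ∀ x, ∀ c : ℤ, |c| ≤ M → ((v x : ℝ) ≤ c ↔ (v' x : ℝ) ≤ c) := fun x c hc => by
      simpa using h (some x) none c ⟨hc, by simp⟩
    have dn : ∀ x, ∀ c : ℤ, |c| ≤ M → ((c : ℝ) ≤ v x ↔ (c : ℝ) ≤ v' x) := fun x c hc => by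
      simpa using h none (some x) (-c) ⟨by simpa using hc, by simp⟩
    have hMM : ∀ x, (v x : ℝ) ≤ M ↔ (v' x : ℝ) ≤ M := fun x => by
      simpa using up x M (by simp)
    have hfl : ∀ w : ClockVal Y, ∀ x, (w x : ℝ) ≤ M → |⌊(w x : ℝ)⌋| ≤ M := fun w x hx => by
      rw [abs_of_nonneg (Int.floor_nonneg.2 (NNReal.coe_nonneg (w x)))]
      have : ((⌊(w x : ℝ)⌋ : ℤ) : ℝ) ≤ ((M : ℤ) : ℝ) := by
        push_cast; exact (Int.floor_le _).trans hx
      exact_mod_cast this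
    have hfe : ∀ x, (v x : ℝ) ≤ M → ⌊(v x : ℝ)⌋ = ⌊(v' x : ℝ)⌋ := fun x hx =>
      le_antisymm (Int.le_floor.2 ((dn x _ (hfl v x hx)).1 (Int.floor_le _)))
        (Int.le_floor.2 ((dn x _ (hfl v' x ((hMM x).1 hx))).2 (Int.floor_le _)))
    refine ⟨fun x => ⟨by rw [← not_le, ← not_le, hMM x], hfe x, fun hx => ?_⟩,
      fun x y c h1 h2 => ?_⟩
    · have fr : ∀ w : ℝ, Int.fract w = 0 ↔ w ≤ (⌊w⌋ : ℤ) := fun w => by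
        have := Int.self_sub_floor w
        have := Int.fract_nonneg w
        constructor <;> intro <;> linarith
      rw [fr, fr, up x _ (hfl v x hx), hfe x hx]
    · have hlt : |c| < M := abs_lt.2 ⟨h1, h2⟩
      exact h (some x) (some y) c ⟨hlt.le, by simp [hlt]⟩

lemma DRegEquiv.symm {Y : Type} {M : ℕ} {v v' : ClockVal Y} (h : DRegEquiv M v v') :
    DRegEquiv M v' v := by
  rw [dRegEquiv_iff] at *
  exact fun a b c hc => (h a b c hc).symm

lemma dRegEquiv_of_diffEq {Y : Type} (M : ℕ) {v v' : ClockVal Y}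
    (h : DiffEq univ (hom v) (hom v')) : DRegEquiv M v v' := by
  rw [dRegEquiv_iff]
  exact fun a b c _ => h a trivial b trivial c

/-! ### Approximation is sound for regions -/

lemma subset_approxZ {Y : Type} (M : ℕ) (T : Set (ClockVal Y)) : T ⊆ approxZ M T :=
  subset_sInter fun _ hS => hS.1

lemma convexVal_approxZ {Y : Type} (M : ℕ) (T : Set (ClockVal Y)) : ConvexVal (approxZ M T) :=
  fun u hu w hw θ hθ S hS => hS.2.1 u (hu S hS) w (hw S hS) θ hθ

lemma union_approxZ {Y : Type} (M : ℕ) (T : Set (ClockVal Y)) :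
    UnionOfClasses (DRegEquiv M) (approxZ M T) :=
  fun u hu w hw S hS => hS.2.2 u (hu S hS) w hw

lemma approxZ_subset {Y : Type} {M : ℕ} {T S : Set (ClockVal Y)} (h : T ⊆ S)
    (hc : ConvexVal S) (hu : UnionOfClasses (DRegEquiv M) S) : approxZ M T ⊆ S :=
  sInter_subset_of_mem ⟨h, hc, hu⟩

lemma eSat_of_union {Y : Type} {M : ℕ} {S : Set (ClockVal Y)}
    (h : UnionOfClasses (DRegEquiv M) S) : ESat S :=
  fun v hv v' hd => h v hv v' (dRegEquiv_of_diffEq M hd)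

/-- The face of `S` that contains `p` in its relative interior: the points from which the segment
to `p` can be prolonged inside `S`. -/
def face {Y : Type} (S : Set (ClockVal Y)) (p : ClockVal Y) : Set (ClockVal Y) :=
  {s | s ∈ S ∧ ∃ ε : ℝ, 0 < ε ∧ ∃ z ∈ S, ∀ x, (z x : ℝ) = p x + ε * (p x - s x)}

lemma face_shrink {Y : Type} {S : Set (ClockVal Y)} (hS : ConvexVal S) {p z s : ClockVal Y}
    (hp : p ∈ S) (hz : z ∈ S) {ε η : ℝ} (hη : 0 < η) (hle : η ≤ ε)
    (h : ∀ x, (z x : ℝ) = p x + ε * (p x - s x)) :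
    ∃ z' ∈ S, ∀ x, (z' x : ℝ) = p x + η * (p x - s x) := by
  have hε : 0 < ε := by linarith
  obtain ⟨z', hz', h'⟩ := ConvexVal.exists_mem hS hz hp (θ := η / ε) (by positivity)
    ((div_le_one hε).2 hle)
  refine ⟨z', hz', fun x => ?_⟩
  rw [h', h]; field_simp; ring

lemma mem_face_self {Y : Type} {S : Set (ClockVal Y)} {p : ClockVal Y} (hp : p ∈ S) :
    p ∈ face S p := ⟨hp, 1, one_pos, p, hp, fun x => by simp⟩

lemma convexVal_face {Y : Type} {S : Set (ClockVal Y)} (hS : ConvexVal S) {p : ClockVal Y}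
    (hp : p ∈ S) : ConvexVal (face S p) := by
  refine convexVal_of ?_
  rintro u ⟨hu, ε, hε, z, hz, hzx⟩ w ⟨hw, ε', hε', z', hz', hzx'⟩ θ h0 h1 y hy
  obtain ⟨m, hm, hm', hm0⟩ : ∃ m, m ≤ ε ∧ m ≤ ε' ∧ 0 < m :=
    ⟨min ε ε', min_le_left _ _, min_le_right _ _, lt_min hε hε'⟩
  obtain ⟨a, ha, hax⟩ := face_shrink hS hp hz hm0 hm hzx
  obtain ⟨b, hb, hbx⟩ := face_shrink hS hp hz' hm0 hm' hzx'
  obtain ⟨c, hc, hcx⟩ := ConvexVal.exists_mem hS ha hb h0 h1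
  refine ⟨ConvexVal.mem hS hu hw h0 h1 hy, m, hm0, c, hc, fun x => ?_⟩
  rw [hcx, hax, hbx, hy]; ring

lemma face_extreme {Y : Type} {S : Set (ClockVal Y)} (hS : ConvexVal S) {p a b c : ClockVal Y}
    (ha : a ∈ S) (hb : b ∈ S) (hc : c ∈ face S p) {θ : ℝ} (h0 : 0 < θ) (h1 : θ ≤ 1)
    (h : ∀ x, (c x : ℝ) = θ * a x + (1 - θ) * b x) : a ∈ face S p := by
  obtain ⟨_, ε, hε, z, hz, hzx⟩ := hc
  have hd : 0 < 1 + ε * (1 - θ) := by nlinarith [mul_nonneg hε.le (sub_nonneg.2 h1)]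
  have hd1 : 1 ≤ 1 + ε * (1 - θ) := by nlinarith [mul_nonneg hε.le (sub_nonneg.2 h1)]
  obtain ⟨y, hy, hyx⟩ := ConvexVal.exists_mem hS hz hb (θ := 1 / (1 + ε * (1 - θ)))
    (by positivity) ((div_le_one hd).2 hd1)
  refine ⟨ha, ε * θ / (1 + ε * (1 - θ)), by positivity, y, hy, fun x => ?_⟩
  rw [hyx, hzx, h]
  field_simp
  ring

lemma eventually_le_iff {α β β' c : ℝ} (h : α = c → (β ≤ 0 ↔ β' ≤ 0)) :
    ∀ᶠ η in 𝓝[>] (0 : ℝ), α + η * β ≤ c ↔ α + η * β' ≤ c := by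
  have hlim : ∀ γ : ℝ, Tendsto (fun η : ℝ => α + η * γ) (𝓝[>] 0) (𝓝 α) := by
    intro γ
    have : Continuous fun η : ℝ => α + η * γ := by fun_prop
    simpa using (this.tendsto 0).mono_left nhdsWithin_le_nhds
  rcases lt_trichotomy α c with hc | hc | hc
  · filter_upwards [(hlim β).eventually (gt_mem_nhds hc),
      (hlim β').eventually (gt_mem_nhds hc)] with η h1 h2
    exact ⟨fun _ => h2.le, fun _ => h1.le⟩
  · replace h := h hc
    subst hc
    filter_upwards [self_mem_nhdsWithin] with η h0
    have h0 : 0 < η := h0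
    have : ∀ γ : ℝ, α + η * γ ≤ α ↔ γ ≤ 0 := fun γ => by
      refine ⟨fun h => ?_, fun h => by nlinarith⟩
      by_contra hh
      nlinarith [mul_pos h0 (not_le.1 hh)]
    rw [this, this, h]
  · filter_upwards [(hlim β).eventually (lt_mem_nhds hc),
      (hlim β').eventually (lt_mem_nhds hc)] with η h1 h2
    exact ⟨fun h => absurd h (not_le.2 h1), fun h => absurd h (not_le.2 h2)⟩

lemma union_face {Y : Type} [Finite Y] {M : ℕ} {S : Set (ClockVal Y)} (hS : ConvexVal S)
    (hu : UnionOfClasses (DRegEquiv M) S) {p : ClockVal Y} (hp : p ∈ S) :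
    UnionOfClasses (DRegEquiv M) (face S p) := by
  rintro s ⟨hs, ε, hε, z, hz, hzx⟩ s' hd
  refine ⟨hu s hs s' hd, ?_⟩
  rw [dRegEquiv_iff] at hd
  have hforms : ∀ᶠ η in 𝓝[>] (0 : ℝ), ∀ a b : Option Y, ∀ c ∈ Finset.Icc (-(M : ℤ)) M,
      Valid M a b c →
      ((hom p a - hom p b) + η * ((hom p a - hom p b) - (hom s a - hom s b)) ≤ c ↔
        (hom p a - hom p b) + η * ((hom p a - hom p b) - (hom s' a - hom s' b)) ≤ c) := by
    rw [eventually_all]; intro a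
    rw [eventually_all]; intro b
    rw [Finset.eventually_all]; intro c _
    by_cases hv : Valid M a b c
    · refine (eventually_le_iff fun he => ?_).mono fun η hη _ => hη
      have := hd b a (-c) hv.swap
      push_cast at this
      rw [he]
      constructor
      · intro h; linarith [this.1 (by linarith)]
      · intro h; linarith [this.2 (by linarith)]
    · simp [hv]
  have hpos : ∀ᶠ η in 𝓝[>] (0 : ℝ), ∀ y, 0 ≤ (p y : ℝ) + η * (p y - s' y) := by
    rw [eventually_all]; intro y
    have := eventually_le_iff (α := -(p y : ℝ)) (β := -(p y - s' y : ℝ)) (β' := 0) (c := 0)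
      fun h => by
        have hp0 : (p y : ℝ) = 0 := by linarith
        have hs0 : (s y : ℝ) ≤ 0 := by
          have h1 := hzx y
          have h2 : (0 : ℝ) ≤ z y := (z y).2
          rw [hp0] at h1
          by_contra hh
          nlinarith [mul_pos hε (not_le.1 hh)]
        have := (hd (some y) none 0 ⟨by simp, by simp⟩).1 (by simpa using hs0)
        simp only [hom_some, hom_none, sub_zero, Int.cast_zero] at this
        rw [hp0]
        constructor <;> intro <;> linarith
    filter_upwards [this] with η hη
    have := hη.2 (by simp)
    linarith
  have hle : ∀ᶠ η in 𝓝[>] (0 : ℝ), η < ε := nhdsWithin_le_nhds (gt_mem_nhds hε)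
  have h0 : ∀ᶠ η in 𝓝[>] (0 : ℝ), 0 < η := self_mem_nhdsWithin
  obtain ⟨η, ⟨hf, hη⟩, hηε, hη0⟩ := ((hforms.and hpos).and (hle.and h0)).exists
  obtain ⟨w, hw, hwx⟩ := face_shrink hS hp hz hη0 hηε.le hzx
  obtain ⟨w', hwx'⟩ := exists_val _ hη
  refine ⟨η, hη0, w', hu w hw w' ?_, hwx'⟩
  rw [dRegEquiv_iff]
  intro a b c hv
  have e : ∀ a, hom w a = (1 + η) * hom p a + (-η) * hom s a :=
    hom_lin fun x => by rw [hwx]; ring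
  have e' : ∀ a, hom w' a = (1 + η) * hom p a + (-η) * hom s' a :=
    hom_lin fun x => by rw [hwx']; ring
  have := hf a b c (Finset.mem_Icc.2 (abs_le.1 hv.1)) hv
  rw [e, e, e', e']
  convert this using 2 <;> ring

/-- The face of `approxZ M T` at `p` is generated by the points of `T` on it. -/
lemma face_subset {Y : Type} [Finite Y] {M : ℕ} {T K : Set (ClockVal Y)} {p : ClockVal Y}
    (hp : p ∈ approxZ M T) (hK : ConvexVal K) (hKu : UnionOfClasses (DRegEquiv M) K)
    (h : T ∩ face (approxZ M T) p ⊆ K) : face (approxZ M T) p ⊆ K := by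
  set S := approxZ M T
  have hS : ConvexVal S := convexVal_approxZ M T
  have hu : UnionOfClasses (DRegEquiv M) S := union_approxZ M T
  have hF := union_face hS hu hp
  have : S ⊆ {s | s ∈ S ∧ (s ∈ face S p → s ∈ K)} := by
    refine approxZ_subset (fun t ht => ⟨subset_approxZ M T ht, fun hf => h ⟨ht, hf⟩⟩) ?_ ?_
    · refine convexVal_of ?_
      rintro u ⟨hu1, hu2⟩ w ⟨hw1, hw2⟩ θ h0 h1 z hz
      refine ⟨ConvexVal.mem hS hu1 hw1 h0 h1 hz, fun hzF => ?_⟩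
      rcases h0.eq_or_lt with rfl | h0'
      · have : z = w := val_ext fun x => by rw [hz]; ring
        rw [this] at hzF ⊢; exact hw2 hzF
      rcases h1.eq_or_lt with rfl | h1'
      · have : z = u := val_ext fun x => by rw [hz]; ring
        rw [this] at hzF ⊢; exact hu2 hzF
      · exact ConvexVal.mem hK (hu2 (face_extreme hS hu1 hw1 hzF h0' h1 hz))
          (hw2 (face_extreme hS hw1 hu1 hzF (θ := 1 - θ) (by linarith) (by linarith)
            fun x => by rw [hz]; ring)) h0 h1 hz
    · rintro v ⟨hv1, hv2⟩ v' hd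
      exact ⟨hu v hv1 v' hd, fun hf => hKu v (hv2 (hF v' hf v (DRegEquiv.symm hd))) v' hd⟩
  exact fun s hs => (this hs.1).2 hs

/-- A valid constraint satisfied by the points of `T` on the face of `p` is satisfied by `p`; and
it is an equality on the whole face as soon as it is one at `p`. -/
lemma face_form {Y : Type} [Finite Y] {M : ℕ} {T : Set (ClockVal Y)} {p : ClockVal Y}
    (hp : p ∈ approxZ M T) {a b : Option Y} {c : ℤ} (hv : Valid M a b c)
    (h : ∀ t ∈ T ∩ face (approxZ M T) p, hom t a - hom t b ≤ c) :
    hom p a - hom p b ≤ c ∧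
      (hom p a - hom p b = c → ∀ s ∈ face (approxZ M T) p, hom s a - hom s b = c) := by
  have hsub : face (approxZ M T) p ⊆ {s | hom s a - hom s b ≤ c} := by
    refine face_subset hp ?_ ?_ h
    · refine convexVal_of ?_
      intro u hu w hw θ h0 h1 z hz
      have hu : hom u a - hom u b ≤ c := hu
      have hw : hom w a - hom w b ≤ c := hw
      show hom z a - hom z b ≤ c
      rw [hom_lin hz, hom_lin hz]
      nlinarith [mul_le_mul_of_nonneg_left hu h0, mul_le_mul_of_nonneg_left hw (sub_nonneg.2 h1)]
    · intro v hv' v' hd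
      exact ((dRegEquiv_iff M v v').1 hd a b c hv).1 hv'
  refine ⟨hsub (mem_face_self hp), fun he s hs => le_antisymm (hsub hs) ?_⟩
  obtain ⟨hsS, ε, hε, z, hz, hzx⟩ := hs
  have hzF : z ∈ face (approxZ M T) p :=
    ⟨hz, 1 / ε, by positivity, s, hsS, fun x => by rw [hzx]; field_simp; ring⟩
  have h1 : hom z a - hom z b ≤ c := hsub hzF
  have e : ∀ a, hom z a = (1 + ε) * hom p a + (-ε) * hom s a :=
    hom_lin fun x => by rw [hzx]; ring
  rw [e, e] at h1
  have h2 : ε * (c - (hom s a - hom s b)) ≤ 0 := by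
    have : (1 + ε) * (hom p a - hom p b) = (1 + ε) * c := by rw [he]
    linarith
  by_contra hh
  nlinarith [mul_pos hε (sub_pos.2 (not_le.1 hh))]

/-- Every valuation in the approximation of a convex union of unbounded regions is region
equivalent to one in the set itself. -/
lemma exists_rEq_of_mem_approxZ {Y : Type} [Finite Y] {M : ℕ} {T : Set (ClockVal Y)}
    (hc : ConvexVal T) (hs : ESat T) {p : ClockVal Y} (hp : p ∈ approxZ M T) :
    ∃ t ∈ T, REq M t p := by
  classical
  cases nonempty_fintype Y
  let F := face (approxZ M T) p
  let T' := T ∩ F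
  have hS : ConvexVal (approxZ M T) := convexVal_approxZ M T
  have hFc : ConvexVal F := convexVal_face hS hp
  have hFs : ESat F := eSat_of_union (union_face hS (union_approxZ M T) hp)
  have hc' : ConvexVal T' := fun u hu w hw θ hθ => ⟨hc u hu.1 w hw.1 θ hθ, hFc u hu.2 w hw.2 θ hθ⟩
  have hs' : ESat T' := fun v hv v' hd => ⟨hs v hv.1 v' hd, hFs v hv.2 v' hd⟩
  have hne : T'.Nonempty := by
    by_contra hne
    rw [not_nonempty_iff_eq_empty] at hne
    exact face_subset (K := ∅) hp (fun _ h => h.elim) (fun _ h => h.elim) hne.subset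
      (mem_face_self hp)
  have form : ∀ {a b : Option Y} {c : ℤ}, Valid M a b c →
      (∀ t ∈ T', hom t a - hom t b ≤ c) → hom p a - hom p b ≤ c ∧
      (hom p a - hom p b = c → ∀ s ∈ T', hom s a - hom s b = c) := fun hv h =>
    ⟨(face_form hp hv h).1, fun he s hs => (face_form hp hv h).2 he s hs.2⟩
  have v0 : ∀ b : Option Y, Valid M none b 0 := fun b => ⟨by simp, by simp⟩
  -- A coordinate that vanishes at `p` vanishes on the face.
  have zero : ∀ b, hom p b = 0 → ∀ t ∈ T', hom t b = 0 := fun b hb t ht => by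
    have := (form (v0 b) fun t _ => by simp [hom_nonneg]).2 (by simp [hb]) t ht
    simpa using this
  -- No constraint between bounded coordinates weakly separates `p` from `T'` unless it is frozen
  -- there. The bound `c` may be `±M`, where diagonal constraints are not valid; then one coordinate
  -- is `0` and the other `M`, and single-clock constraints take over.
  have mixed : ∀ a b, hom p a ≤ M → hom p b ≤ M →
      (∃ t ∈ T', hom p a - hom p b < hom t a - hom t b) ∨
        ∀ t ∈ T', hom t a - hom t b = hom p a - hom p b := by
    intro a b ha hb
    by_contra! hcon
    obtain ⟨hle, t₁, ht₁, hne₁⟩ := hcon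
    have hfl := hs'.le_floor hle
    have hα := Int.floor_le (hom p a - hom p b)
    set c := ⌊hom p a - hom p b⌋ with hcdef
    have ha0 := hom_nonneg p a
    have hb0 := hom_nonneg p b
    have hcM : |c| ≤ M := by
      rw [abs_le]
      constructor
      · rw [hcdef, Int.le_floor]; push_cast; linarith
      · have : (c : ℝ) ≤ (M : ℤ) := by push_cast; linarith
        exact_mod_cast this
    by_cases hv : Valid M a b c
    · have h1 := form hv hfl
      have he := le_antisymm h1.1 hα
      exact hne₁ (by rw [he]; exact h1.2 he t₁ ht₁)
    · have hab : c = M ∨ c = -M := by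
        have : ¬ |c| < M := fun h => hv ⟨hcM, by simp [h]⟩
        have : |c| = M := le_antisymm hcM (not_lt.1 this)
        rcases abs_cases c with h | h <;> omega
      rcases hab with hM | hM
      · rw [hM] at hα hfl; push_cast at hα hfl
        have hb1 : hom p b = 0 := by linarith
        have ha1 : hom p a = M := by linarith
        have hz := zero b hb1
        have := (form (a := a) (b := none) (c := M) ⟨by simp, by simp⟩ fun t ht => by
          have := hfl t ht
          rw [hz t ht] at this
          simpa using this).2 (by simp [ha1]) t₁ ht₁
        apply hne₁
        rw [ha1, hb1, hz t₁ ht₁]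
        simpa using this
      · rw [hM] at hfl; push_cast at hfl
        have h1 := form (a := none) (b := b) (c := -M) ⟨by simp, by simp⟩ fun t ht => by
          have := hfl t ht
          have := hom_nonneg t a
          push_cast; simp only [hom_none]; linarith
        push_cast at h1
        simp only [hom_none] at h1
        have hb1 : hom p b = M := by linarith [h1.1]
        have h2 := h1.2 (by rw [hb1]; ring)
        have h3 := form (a := a) (b := none) (c := 0) ⟨by simp, by simp⟩ fun t ht => by
          have := hfl t ht
          have := h2 t ht
          push_cast; simp only [hom_none]; linarith
        simp only [hom_none, sub_zero, Int.cast_zero] at h3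
        have ha1 : hom p a = 0 := le_antisymm h3.1 ha0
        apply hne₁
        rw [ha1, hb1, zero a ha1 t₁ ht₁]
        linarith [h2 t₁ ht₁]
  -- Likewise, no constraint keeps an unbounded clock `u` at most `M` once `a` is fixed to `hom p a`.
  have large : ∀ u a, (M : ℝ) < hom p u → hom p a ≤ M →
      ∃ t ∈ T', (M : ℝ) < hom p a + hom t u - hom t a := by
    intro u a hu ha
    by_contra! hcon
    have hfl := hs'.le_floor (a := u) (b := a) (α := M - hom p a) fun t ht => by
      linarith [hcon t ht]
    have hα := Int.floor_le ((M : ℝ) - hom p a)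
    set c := ⌊(M : ℝ) - hom p a⌋ with hcdef
    have ha0 := hom_nonneg p a
    have hc0 : 0 ≤ c := Int.floor_nonneg.2 (by linarith)
    have hcM : c ≤ M := by
      have : (c : ℝ) ≤ (M : ℤ) := by push_cast; linarith
      exact_mod_cast this
    by_cases hlt : c < M
    · have habs : |c| < M := by rwa [abs_of_nonneg hc0]
      have := (form ⟨habs.le, by simp [habs]⟩ hfl).1
      linarith
    · have hM : c = M := le_antisymm hcM (not_lt.1 hlt)
      rw [hM] at hα hfl; push_cast at hα hfl
      have hz := zero a (by linarith)
      have := (form (a := u) (b := none) (c := M) ⟨by simp, by simp⟩ fun t ht => by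
        have := hfl t ht
        rw [hz t ht] at this
        simpa using this).1
      simp only [hom_none, sub_zero, Int.cast_natCast] at this
      linarith
  let B : Finset (Option Y) := Finset.univ.filter fun a => hom p a ≤ M
  let U : Finset (Option Y) := Finset.univ.filter fun a => ¬ hom p a ≤ M
  obtain ⟨J, hJB, hJ1, hJ2⟩ := exists_representatives (T := homSet T') (hom p) B (by
    intro a ha b hb
    rcases mixed a b (by simpa [B] using ha) (by simpa [B] using hb) with ⟨t, ht, h⟩ | h
    · exact Or.inl ⟨hom t, hom_mem_homSet ht, h⟩
    · refine Or.inr ?_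
      rintro w ⟨t, ht, hw⟩
      rw [homSet_sub hw, h t ht])
  have hJne : J.Nonempty := by
    obtain ⟨k, hk, _⟩ := hJ2 none (by simp [B])
    exact ⟨k, hk⟩
  obtain ⟨w, hw, hwJ, hwU⟩ := agree_on_and_large (convex_homSet hc') (saturated_homSet hs')
    (hne.imp' hom fun _ h => hom_mem_homSet h) M U J (hom p) hJne hJ1 (by
      intro u hu a ha
      obtain ⟨t, ht, h⟩ := large u a (by simpa [U] using hu) (by simpa [B] using hJB ha)
      exact ⟨hom t, hom_mem_homSet ht, h⟩)
  have hwB : ∀ a ∈ B, w a = hom p a := fun a ha => by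
    obtain ⟨k, hk, h⟩ := hJ2 a ha
    have := h w hw
    rw [hwJ k hk] at this
    linarith
  obtain ⟨t, ht, hwt⟩ := hw
  have hw0 : w none = 0 := hwB none (by simp [B])
  have hwt : ∀ a, hom t a = w a := fun a => by rw [← hwt, hw0, sub_zero]
  have hle : ∀ a, hom t a ≤ M ↔ hom p a ≤ M := fun a => by
    by_cases ha : hom p a ≤ M
    · rw [hwt, hwB a (by simpa [B] using ha)]
    · have := hwU a (by simpa [U] using ha)
      rw [hwt]
      exact ⟨fun h => absurd h (not_le.2 this), fun h => absurd h ha⟩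
  refine ⟨t, ht.1, hle, fun a ha b hb c => ?_⟩
  rw [hwt, hwt, hwB a (by simpa [B] using (hle a).1 ha), hwB b (by simpa [B] using (hle b).1 hb)]

/-! ### Region equivalence is a time-abstract bisimulation -/

lemma rEq_of_diffEq {Y : Type} (M : ℕ) {v v' : ClockVal Y}
    (h : DiffEq univ (hom v) (hom v')) : REq M v v' :=
  ⟨fun a => by simpa using h a trivial none trivial M,
    fun a _ b _ c => h a trivial b trivial c⟩

lemma REq.symm {Y : Type} {M : ℕ} {v v' : ClockVal Y} (h : REq M v v') : REq M v' v :=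
  ⟨fun a => (h.1 a).symm, fun a ha b hb c =>
    (h.2 a ((h.1 a).2 ha) b ((h.1 b).2 hb) c).symm⟩

open Classical in
/-- The coordinate whose value is read at `a` after resetting `R`. -/
noncomputable def readAt {Y : Type} (R : Set Y) : Option Y → Option Y
  | none => none
  | some y => if y ∈ R then none else some y

lemma hom_resetVal {Y : Type} (R : Set Y) (v : ClockVal Y) (a : Option Y) :
    hom (resetVal R v) a = hom v (readAt R a) := by
  rcases a with _ | y
  · rfl
  · by_cases h : y ∈ R <;> simp [readAt, resetVal, h]

lemma REq.reset {Y : Type} {M : ℕ} {v v' : ClockVal Y} (h : REq M v v') (R : Set Y) :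
    REq M (resetVal R v) (resetVal R v') := by
  refine ⟨fun a => ?_, fun a ha b hb c => ?_⟩
  · rw [hom_resetVal, hom_resetVal]; exact h.1 _
  · simp only [mem_ofPred_eq, hom_resetVal] at ha hb ⊢
    exact h.2 _ ha _ hb c

lemma REq.delay {Y : Type} [Finite Y] {M : ℕ} {v v' : ClockVal Y} (h : REq M v v') (d : NNReal) :
    ∃ d', REq M (ClockVal.add v d) (ClockVal.add v' d') := by
  obtain ⟨r, hr⟩ := h.2.extend_one (Set.toFinite _) (-(d : ℝ))
  have h0 : (none : Option Y) ∈ {a | hom v a ≤ M} := by simp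
  have hr0 : 0 ≤ -r := by
    have := ((hr none h0 0).2.1 (by simp))
    simp only [hom_none, Int.cast_zero] at this; linarith
  obtain ⟨d', hd'⟩ : ∃ d' : NNReal, (d' : ℝ) = -r := ⟨⟨-r, hr0⟩, rfl⟩
  have hM : ∀ a, hom (ClockVal.add v d) a ≤ M → hom v a ≤ M := by
    rintro (_ | y) ha
    · simp
    · simp only [hom_some, ClockVal.add, NNReal.coe_add] at ha ⊢
      linarith [d.coe_nonneg]
  refine ⟨d', ?_, ?_⟩
  · rintro (_ | y)
    · simp
    · by_cases hy : hom v (some y) ≤ M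
      · have := (hr (some y) hy M).1
        simp only [hom_some, ClockVal.add, NNReal.coe_add, hd', Int.cast_natCast] at this ⊢
        rw [← sub_neg_eq_add, this, sub_eq_add_neg]
      · have hy' : ¬ hom v' (some y) ≤ M := fun h' => hy ((h.1 _).2 h')
        simp only [hom_some, ClockVal.add, NNReal.coe_add] at hy hy' ⊢
        have := d.coe_nonneg
        have := d'.coe_nonneg
        constructor <;> intro <;> [exact absurd (by linarith) hy; exact absurd (by linarith) hy']
  · intro a ha b hb c
    have ha := hM a ha
    have hb := hM b hb
    rcases a with _ | x <;> rcases b with _ | y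
    · simp
    · have := (hr (some y) hb c).2
      simp only [hom_some, hom_none, ClockVal.add, NNReal.coe_add, hd'] at this ⊢
      rw [show 0 - ((v y : ℝ) + d) = -d - v y by ring, this,
        show 0 - ((v' y : ℝ) + -r) = r - v' y by ring]
    · have := (hr (some x) ha c).1
      simp only [hom_some, hom_none, ClockVal.add, NNReal.coe_add, hd', sub_zero] at this ⊢
      rw [← sub_neg_eq_add, this, sub_eq_add_neg]
    · have := h.2 _ ha _ hb c
      simpa [ClockVal.add] using this

lemma REq.le_iff {Y : Type} {M : ℕ} {v v' : ClockVal Y} (h : REq M v v') (y : Y) {c : ℕ}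
    (hc : c ≤ M) : ((v y : ℝ) ≤ c ↔ (v' y : ℝ) ≤ c) ∧ ((c : ℝ) ≤ v y ↔ (c : ℝ) ≤ v' y) := by
  have hcM : (c : ℝ) ≤ M := by exact_mod_cast hc
  by_cases hy : hom v (some y) ≤ M
  · have h0 : (none : Option Y) ∈ {a | hom v a ≤ M} := by simp
    have h1 := h.2 _ hy _ h0 c
    have h2 := h.2 _ h0 _ hy (-c)
    simp only [hom_some, hom_none, sub_zero, zero_sub, Int.cast_neg, Int.cast_natCast,
      neg_le_neg_iff] at h1 h2
    exact ⟨h1, h2⟩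
  · have hy' : ¬ hom v' (some y) ≤ M := fun h' => hy ((h.1 _).2 h')
    simp only [hom_some, not_le] at hy hy'
    constructor <;> constructor <;> intro <;> linarith

lemma REq.guard {Y : Type} {M : ℕ} {v v' : ClockVal Y} (h : REq M v v') (y : Y) {c : ℕ}
    (hc : c ≤ M) (op : CmpOp) (hs : CmpOp.sat op (v y : ℝ) c) : CmpOp.sat op (v' y : ℝ) c := by
  obtain ⟨h1, h2⟩ := h.le_iff y hc
  cases op <;> simp only [CmpOp.sat] at hs ⊢
  · rw [← not_le] at hs ⊢; rwa [← h2]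
  · exact h1.1 hs
  · exact le_antisymm (h1.1 hs.le) (h2.1 hs.ge)
  · exact h2.1 hs
  · rw [gt_iff_lt, ← not_le] at hs ⊢; rwa [← h1]

/-- There are finitely many regions. -/
lemma exists_code {Y : Type} [Finite Y] (M : ℕ) :
    ∃ (K : Type) (_ : Finite K) (code : ClockVal Y → K),
      ∀ v v', code v = code v' → REq M v v' := by
  refine ⟨(Option Y → Prop) × (Option Y → Option Y → Set.Icc (-(M : ℤ)) M → Prop),
    inferInstance, fun v => (fun a => hom v a ≤ M, fun a b c => hom v a - hom v b ≤ (c : ℤ)), ?_⟩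
  intro v v' h
  obtain ⟨h1, h2⟩ := Prod.mk.inj h
  have h1 : ∀ a, hom v a ≤ M ↔ hom v' a ≤ M := fun a => iff_of_eq (congrFun h1 a)
  refine ⟨h1, fun a ha b hb c => ?_⟩
  have ha' := (h1 a).1 ha
  have hb' := (h1 b).1 hb
  have ha : hom v a ≤ M := ha
  have hb : hom v b ≤ M := hb
  have := hom_nonneg v a
  have := hom_nonneg v b
  have := hom_nonneg v' a
  have := hom_nonneg v' b
  by_cases hlow : -(M : ℤ) ≤ c
  · by_cases hup : c ≤ M
    · exact iff_of_eq (congrFun (congrFun (congrFun h2 a) b) ⟨c, hlow, hup⟩)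
    · have : ((M : ℤ) : ℝ) < c := by exact_mod_cast not_le.1 hup
      push_cast at this
      constructor <;> intro <;> linarith
  · have : (c : ℝ) < ((-(M : ℤ) : ℤ) : ℝ) := by exact_mod_cast not_le.1 hlow
    push_cast at this
    constructor <;> intro <;> linarith

/-! ### Successors preserve convex unions of unbounded regions -/

/-- Valuations reached by a delay, the guard `G`, and the reset `R`. -/
def post {Y : Type} (G : ClockVal Y → Prop) (R : Set Y) (V : Set (ClockVal Y)) :
    Set (ClockVal Y) :=
  {v' | ∃ v ∈ V, ∃ d : NNReal, G (ClockVal.add v d) ∧ v' = resetVal R (ClockVal.add v d)}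

lemma convexVal_post {Y : Type} {G : ClockVal Y → Prop} (R : Set Y) {V : Set (ClockVal Y)}
    (hG : ConvexVal {v | G v}) (hV : ConvexVal V) : ConvexVal (post G R V) := by
  rintro _ ⟨v, hv, d, hd, rfl⟩ _ ⟨w, hw, e, he, rfl⟩ θ hθ
  refine ⟨_, hV v hv w hw θ hθ, θ * d + (1 - θ) * e, ?_, ?_⟩
  · have := hG _ hd _ he θ hθ
    convert this using 1
    simp only [mem_ofPred_eq]
    congr! 1
    funext y
    simp only [ClockVal.add]; ring
  · funext y
    by_cases hy : y ∈ R <;> simp [resetVal, ClockVal.add, hy]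
    ring

lemma undo_reset {Y : Type} [Finite Y] (R : Set Y) {u w : ClockVal Y}
    (h : DiffEq univ (hom (resetVal R u)) (hom w)) :
    ∃ u', DiffEq univ (hom u) (hom u') ∧ w = resetVal R u' := by
  have hJ : DiffEq {a | readAt R a = a} (hom u) (hom w) := fun a ha b hb c => by
    have := h a trivial b trivial c
    rw [hom_resetVal, hom_resetVal] at this
    rwa [show readAt R a = a from ha, show readAt R b = b from hb] at this
  obtain ⟨w', h1, h2⟩ := hJ.extend_all
  have h0 : w' none = 0 := h2 none rfl
  obtain ⟨u', hu'⟩ := exists_val (fun y => w' (some y)) fun y => by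
    have := (h1 none trivial (some y) trivial 0).1 (by simp)
    simp only [Int.cast_zero, h0] at this; linarith
  have hw : w' = hom u' := by
    funext a; rcases a with _ | y
    · simp [h0]
    · simp [hu']
  refine ⟨u', hw ▸ h1, val_ext fun y => ?_⟩
  by_cases hy : y ∈ R
  · have := (h (some y) trivial none trivial 0).1 (by simp [resetVal, hy])
    simp only [hom_some, hom_none, sub_zero, Int.cast_zero] at this
    simpa [resetVal, hy] using le_antisymm this (w y).coe_nonneg
  · have := h2 (some y) (by simp [readAt, hy])
    rw [← hu'] at this
    simpa [resetVal, hy] using this.symm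

lemma undo_delay {Y : Type} [Finite Y] {v u : ClockVal Y} {d : NNReal}
    (h : DiffEq univ (hom (ClockVal.add v d)) (hom u)) :
    ∃ v' d', DiffEq univ (hom v) (hom v') ∧ u = ClockVal.add v' d' := by
  obtain ⟨r, hr⟩ := h.extend_one (Set.toFinite _) (d : ℝ)
  have hr0 : 0 ≤ r := by
    have := (hr none trivial 0).1.1 (by simp)
    simp only [hom_none, Int.cast_zero] at this; linarith
  obtain ⟨v', hv'⟩ := exists_val (fun y => u y - r) fun y => by
    have := (hr (some y) trivial 0).2.1 (by simp [ClockVal.add])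
    simp only [hom_some, Int.cast_zero] at this; linarith
  obtain ⟨d', hd'⟩ : ∃ d' : NNReal, (d' : ℝ) = r := ⟨⟨r, hr0⟩, rfl⟩
  refine ⟨v', d', fun a _ b _ c => ?_, val_ext fun y => ?_⟩
  · rcases a with _ | x <;> rcases b with _ | y
    · simp
    · have := (hr (some y) trivial c).2
      simp only [hom_some, hom_none, ClockVal.add, NNReal.coe_add, hv'] at this ⊢
      rw [show 0 - (v y : ℝ) = d - (v y + d) by ring, this,
        show r - (u y : ℝ) = 0 - (u y - r) by ring]
    · have := (hr (some x) trivial c).1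
      simp only [hom_some, hom_none, ClockVal.add, NNReal.coe_add, hv'] at this ⊢
      rw [show (v x : ℝ) - 0 = v x + d - d by ring, this, sub_zero]
    · have := h (some x) trivial (some y) trivial c
      simp only [hom_some, ClockVal.add, NNReal.coe_add, hv'] at this ⊢
      rw [show (v x : ℝ) - v y = v x + d - (v y + d) by ring, this]
      ring_nf
  · simp only [ClockVal.add, NNReal.coe_add, hv', hd']
    ring

lemma eSat_post {Y : Type} [Finite Y] {M : ℕ} {G : ClockVal Y → Prop} (R : Set Y)
    {V : Set (ClockVal Y)} (hG : ∀ v v', REq M v v' → G v → G v') (hV : ESat V) :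
    ESat (post G R V) := by
  rintro _ ⟨v, hv, d, hd, rfl⟩ w hw
  obtain ⟨u, hu, rfl⟩ := undo_reset R hw
  have hGu := hG _ _ (rEq_of_diffEq M hu) hd
  obtain ⟨v', d', hv', rfl⟩ := undo_delay hu
  exact ⟨v', hV v hv v' hv', d', hGu, rfl⟩

/-! ### Abstract paths are realised by runs -/

/-- `v` admits `n` steps along the guards and resets from position `i` on. -/
def Ext {Y : Type} (G : ℕ → ClockVal Y → Prop) (R : ℕ → Set Y) : ℕ → ℕ → ClockVal Y → Prop
  | 0, _, _ => True
  | n + 1, i, v => ∃ d : NNReal, G i (ClockVal.add v d) ∧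
      Ext G R n (i + 1) (resetVal (R i) (ClockVal.add v d))

lemma Ext.of_rEq {Y : Type} [Finite Y] {M : ℕ} {G : ℕ → ClockVal Y → Prop} {R : ℕ → Set Y}
    (hG : ∀ i v v', REq M v v' → G i v → G i v') (n : ℕ) :
    ∀ i v v', REq M v v' → Ext G R n i v → Ext G R n i v' := by
  induction n with
  | zero => exact fun _ _ _ _ _ => trivial
  | succ n ih =>
    rintro i v v' h ⟨d, hd, he⟩
    obtain ⟨d', hd'⟩ := h.delay d
    exact ⟨d', hG i _ _ hd' hd, ih _ _ _ (hd'.reset _) he⟩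

lemma Ext.mono {Y : Type} {G : ℕ → ClockVal Y → Prop} {R : ℕ → Set Y} (n : ℕ) :
    ∀ m, n ≤ m → ∀ i v, Ext G R m i v → Ext G R n i v := by
  induction n with
  | zero => exact fun _ _ _ _ _ => trivial
  | succ n ih =>
    rintro (_ | m) hm i v h
    · omega
    · obtain ⟨d, hd, he⟩ := h
      exact ⟨d, hd, ih m (by omega) _ _ he⟩

/-- A path of nonempty approximated successor sets, over finitely many clocks, is followed by an
infinite sequence of concrete steps: finite prefixes are realised backwards, and an infinite one
is obtained by König's lemma since there are finitely many regions. -/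
lemma exists_run {Y : Type} [Finite Y] {M : ℕ} {G : ℕ → ClockVal Y → Prop} {R : ℕ → Set Y}
    (hG : ∀ i v v', REq M v v' → G i v → G i v') (hGc : ∀ i, ConvexVal {v | G i v})
    {V : ℕ → Set (ClockVal Y)} (hV0 : V 0 = {zeroVal Y})
    (hV : ∀ i, V (i + 1) = approxZ M (post (G i) (R i) (V i))) (hne : ∀ i, (V i).Nonempty) :
    ∃ (u : ℕ → ClockVal Y) (d : ℕ → NNReal), u 0 = zeroVal Y ∧ ∀ i,
      G i (ClockVal.add (u i) (d i)) ∧ u (i + 1) = resetVal (R i) (ClockVal.add (u i) (d i)) := by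
  have hVc : ∀ i, ConvexVal (V i) ∧ ESat (V i) := by
    rintro (_ | i)
    · rw [hV0]
      refine ⟨?_, ?_⟩
      · rintro u rfl w rfl θ _
        refine mem_singleton_iff.2 (funext fun y => ?_)
        simp [zeroVal]
      · rintro v rfl v' h
        refine mem_singleton_iff.2 (val_ext fun y => ?_)
        have := (h (some y) trivial none trivial 0).1 (by simp [zeroVal])
        simp only [hom_some, hom_none, sub_zero, Int.cast_zero] at this
        simpa [zeroVal] using le_antisymm this (v' y).coe_nonneg
    · rw [hV]
      exact ⟨convexVal_approxZ _ _, eSat_of_union (union_approxZ _ _)⟩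
  have back : ∀ n i, ∃ v ∈ V i, Ext G R n i v := by
    intro n
    induction n with
    | zero => exact fun i => (hne i).imp fun v hv => ⟨hv, trivial⟩
    | succ n ih =>
      intro i
      obtain ⟨v₁, hv₁, he⟩ := ih (i + 1)
      rw [hV] at hv₁
      obtain ⟨t, ⟨v, hv, d, hd, rfl⟩, ht⟩ := exists_rEq_of_mem_approxZ
        (convexVal_post (R i) (hGc i) (hVc i).1) (eSat_post (R i) (hG i) (hVc i).2) hv₁
      exact ⟨v, hv, d, hd, Ext.of_rEq hG n _ _ _ ht.symm he⟩
  have h0 : ∀ n, Ext G R n 0 (zeroVal Y) := fun n => by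
    obtain ⟨v, hv, he⟩ := back n 0
    rw [hV0] at hv
    rwa [mem_singleton_iff.1 hv] at he
  obtain ⟨K, hK, code, hcode⟩ := exists_code (Y := Y) M
  have step : ∀ i v, (∀ n, Ext G R n i v) → ∃ d : NNReal, G i (ClockVal.add v d) ∧
      ∀ n, Ext G R n (i + 1) (resetVal (R i) (ClockVal.add v d)) := by
    intro i v h
    choose d hd he using fun n => h (n + 1)
    obtain ⟨k, hk⟩ := Finite.exists_infinite_fiber fun n =>
      code (resetVal (R i) (ClockVal.add v (d n)))
    have hk' := Set.infinite_coe_iff.1 hk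
    obtain ⟨m, hm⟩ := hk'.nonempty
    refine ⟨d m, hd m, fun n => ?_⟩
    obtain ⟨m', hm', hn⟩ := hk'.exists_gt n
    refine Ext.mono n m' hn.le _ _ (Ext.of_rEq hG m' _ _ _ (hcode _ _ ?_) (he m'))
    exact (show _ = k from hm').trans (show _ = k from hm).symm
  choose! d hd using step
  let u : ℕ → ClockVal Y := fun n =>
    Nat.rec (zeroVal Y) (fun i v => resetVal (R i) (ClockVal.add v (d i v))) n
  have hu : ∀ i n, Ext G R n i (u i) := by
    intro i
    induction i with
    | zero => exact h0
    | succ i ih => exact (hd i (u i) ih).2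
  exact ⟨u, fun i => d i (u i), rfl, fun i => ⟨(hd i (u i) (hu i)).1, rfl⟩⟩

/-! ### Lassos in labelled graphs -/

/-- `l` lists the edges (source, label, target) of a walk from the first node to the second. -/
def Walk {N L : Type} (step : L → N → N → Prop) : N → List (N × L × N) → N → Prop
  | a, [], b => a = b
  | a, e :: l, b => a = e.1 ∧ step e.2.1 e.1 e.2.2 ∧ Walk step e.2.2 l b

lemma Walk.append {N L : Type} {step : L → N → N → Prop} {b c : N} {l l' : List (N × L × N)} :
    ∀ {a}, Walk step a l b → Walk step b l' c → Walk step a (l ++ l') c := by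
  induction l with
  | nil => rintro a rfl h; exact h
  | cons e l ih => exact fun h h' => ⟨h.1, h.2.1, ih h.2.2 h'⟩

lemma Walk.exists_src {N L : Type} {step : L → N → N → Prop} {a b : N} {l : List (N × L × N)}
    (h : Walk step a l b) (hl : l ≠ []) : ∃ e ∈ l, e.1 = a := by
  cases l with
  | nil => exact absurd rfl hl
  | cons e l => exact ⟨e, by simp, h.1.symm⟩

lemma exists_walk {N L : Type} {step : L → N → N → Prop} {r : N → N → Prop}
    (hr : ∀ a b, r a b → ∃ t, step t a b) {a b : N} (h : Relation.ReflTransGen r a b) :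
    ∃ l, Walk step a l b := by
  induction h with
  | refl => exact ⟨[], rfl⟩
  | tail _ h ih =>
    obtain ⟨l, hl⟩ := ih
    obtain ⟨t, ht⟩ := hr _ _ h
    exact ⟨l ++ [(_, t, _)], hl.append ⟨rfl, ht, rfl⟩⟩

lemma Walk.exists_fun {N L : Type} {step : L → N → N → Prop} (t₀ : L) {b : N}
    {l : List (N × L × N)} : ∀ {a}, Walk step a l b →
    ∃ (nd : ℕ → N) (lb : ℕ → L), nd 0 = a ∧ nd l.length = b ∧
      (∀ i < l.length, step (lb i) (nd i) (nd (i + 1))) ∧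
      ∀ e ∈ l, ∃ i < l.length, nd i = e.1 ∧ lb i = e.2.1 := by
  induction l with
  | nil => exact fun {a} h => ⟨fun _ => a, fun _ => t₀, rfl, h, by simp, by simp⟩
  | cons e l ih =>
    rintro a ⟨rfl, hs, h⟩
    obtain ⟨nd, lb, h0, h1, h2, h3⟩ := ih h
    refine ⟨fun i => Nat.casesOn i e.1 nd, fun i => Nat.casesOn i e.2.1 lb, rfl, by simpa using h1,
      ?_, ?_⟩
    · rintro (_ | i) hi
      · simpa [h0] using hs
      · exact h2 i (by simpa using hi)
    · intro e' he'
      rcases List.mem_cons.1 he' with rfl | he'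
      · exact ⟨0, by simp, rfl, rfl⟩
      · obtain ⟨i, hi, h⟩ := h3 e' he'
        exact ⟨i + 1, by simpa using hi, h⟩

/-- A stem followed by a cycle repeated forever. -/
lemma exists_lasso {N L : Type} {step : L → N → N → Prop} {a b : N} {l c : List (N × L × N)}
    (hl : Walk step a l b) (hc : Walk step b c b) (hne : c ≠ []) :
    ∃ (nd : ℕ → N) (lb : ℕ → L), nd 0 = a ∧ (∀ i, step (lb i) (nd i) (nd (i + 1))) ∧
      (range lb).Finite ∧ ∀ e ∈ c, ∀ n, ∃ i ≥ n, nd i = e.1 ∧ lb i = e.2.1 := by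
  obtain ⟨t₀⟩ : Nonempty L := by
    obtain ⟨e, _⟩ := List.exists_mem_of_ne_nil c hne
    exact ⟨e.2.1⟩
  obtain ⟨sn, sl, s0, s1, s2, -⟩ := hl.exists_fun t₀
  obtain ⟨cn, cl, c0, c1, c2, c3⟩ := hc.exists_fun t₀
  have hK : 0 < c.length := List.length_pos_iff.2 hne
  set m := l.length
  set K := c.length
  refine ⟨fun i => if i < m then sn i else cn ((i - m) % K),
    fun i => if i < m then sl i else cl ((i - m) % K), ?_, fun i => ?_, ?_, ?_⟩
  · by_cases hm : 0 < m
    · simp [hm, s0]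
    · have : m = 0 := by omega
      simp only [this] at s1 ⊢
      simp [c0, ← s1, s0]
  · by_cases hi : i < m
    · have h := s2 i hi
      by_cases hi' : i + 1 < m
      · simpa [hi, hi'] using h
      · have him : i + 1 = m := by omega
        rw [him, s1] at h
        simpa [hi, him, c0] using h
    · have hi' : ¬ i + 1 < m := by omega
      have hj := Nat.mod_lt (i - m) hK
      have h := c2 _ hj
      have hsucc : cn ((i + 1 - m) % K) = cn ((i - m) % K + 1) := by
        rw [show i + 1 - m = (i - m) + 1 by omega, Nat.add_mod_eq_ite]
        by_cases hK1 : K = 1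
        · have h0 : (i - m) % K = 0 := by omega
          have h1 : 1 % K = 0 := by rw [hK1]
          have e1 : cn 1 = cn 0 := by rw [← hK1, c1, c0]
          rw [h0, h1, if_neg (by omega)]
          exact e1.symm
        · have h1K : 1 % K = 1 := Nat.mod_eq_of_lt (by omega)
          rw [h1K]
          split_ifs with hle
          · have : (i - m) % K + 1 = K := by omega
            rw [this, c1, Nat.sub_self, c0]
          · rfl
      simp only [hi, hi', if_false]
      rw [hsucc]; exact h
  · refine (((Set.finite_Iio m).image sl).union ((Set.finite_Iio K).image cl)).subset ?_
    rintro _ ⟨i, rfl⟩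
    by_cases hi : i < m
    · exact Or.inl ⟨i, hi, by simp [hi]⟩
    · exact Or.inr ⟨_, Nat.mod_lt (i - m) hK, by simp [hi]⟩
  · intro e he n
    obtain ⟨j, hj, h1, h2⟩ := c3 e he
    have hn : n ≤ m + (j + K * n) := by nlinarith
    refine ⟨m + (j + K * n), hn, ?_⟩
    have : (j + K * n) % K = j := by rw [Nat.add_mul_mod_self_left, Nat.mod_eq_of_lt hj]
    simp [this, h1, h2]

/-! ### Projection to the clocks tested along a path -/

/-- Restriction of a valuation to the clocks in `W`. -/
def restr {X : Type} (W : Set X) (v : ClockVal X) : ClockVal W := fun y => v y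

lemma restr_step {X : Type} (W R : Set X) (v : ClockVal X) (d : NNReal) :
    restr W (resetVal R (ClockVal.add v d)) =
      resetVal {y : W | (y : X) ∈ R} (ClockVal.add (restr W v) d) := by
  funext y
  by_cases hy : (y : X) ∈ R <;> simp [restr, resetVal, ClockVal.add, hy]

lemma convex_cmp (op : CmpOp) (c : ℝ) : Convex ℝ {r | CmpOp.sat op r c} := by
  cases op
  · exact convex_Iio c
  · exact convex_Iic c
  · exact convex_singleton c
  · exact convex_Ici c
  · exact convex_Ioi c

/-- Every infinite path of the zone graph that uses finitely many transitions is followed by a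
run. Only the finitely many clocks tested by these transitions matter. -/
lemma exists_run_along {Q X : Type} {A : TBA Q X} {M : ℕ} (hM : A.BoundsConsts M)
    {nd : ℕ → RNode Q X} {τ : ℕ → TBATrans Q X} (h0 : nd 0 = ZGInit A)
    (hstep : ∀ i, SGTrans A (approxZ M) (τ i) (nd i) (nd (i + 1))) (hfin : (range τ).Finite) :
    ∃ (v : ℕ → ClockVal X) (d : ℕ → NNReal),
      IsRun A (fun i => ((nd i).1, v i)) d τ ∧ ∀ i, v i ∈ (nd i).2 := by
  have htr : ∀ i, τ i ∈ A.trans ∧ (τ i).src = (nd i).1 ∧ (τ i).dst = (nd (i + 1)).1 := fun i => by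
    obtain ⟨_, _, _, _, h⟩ := (hstep i).1
    exact ⟨h.1, h.2.1, h.2.2.1⟩
  let W : Set X := ⋃ t ∈ range τ, {x | ∃ c ∈ t.guard, c.clock = x}
  have hW : W.Finite := hfin.biUnion fun t _ =>
    ((List.finite_toSet t.guard).image AtomicConstraint.clock).subset
      (by rintro x ⟨c, hc, rfl⟩; exact ⟨c, hc, rfl⟩)
  have : Finite W := hW
  have hcW : ∀ i, ∀ c ∈ (τ i).guard, c.clock ∈ W := fun i c hc =>
    mem_biUnion (mem_range_self i) ⟨c, hc, rfl⟩
  let G : ℕ → ClockVal W → Prop := fun i v =>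
    ∀ c (hc : c ∈ (τ i).guard), CmpOp.sat c.cmp (v ⟨c.clock, hcW i c hc⟩ : ℝ) c.bound
  let R : ℕ → Set W := fun i => {y | (y : X) ∈ (τ i).reset}
  have hGs : ∀ i v, Guard.sat (τ i).guard v ↔ G i (restr W v) := fun i v => Iff.rfl
  have hGr : ∀ i v v', REq M v v' → G i v → G i v' := fun i v v' h hv c hc =>
    h.guard _ (hM _ (htr i).1 c hc) _ (hv c hc)
  have hGc : ∀ i, ConvexVal {v | G i v} := fun i => by
    refine convexVal_of fun u hu w hw θ h0 h1 z hz c hc => ?_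
    have := convex_cmp c.cmp c.bound (hu c hc) (hw c hc) h0 (sub_nonneg.2 h1) (by ring)
    rw [hz]; exact this
  let V : ℕ → Set (ClockVal W) := fun n =>
    Nat.rec {zeroVal W} (fun i S => approxZ M (post (G i) (R i) S)) n
  have hVs : ∀ i, V (i + 1) = approxZ M (post (G i) (R i) (V i)) := fun i => rfl
  have hsub : ∀ i, ∀ v ∈ (nd i).2, restr W v ∈ V i := by
    intro i
    induction i with
    | zero =>
      intro v hv
      rw [h0] at hv
      have : v = zeroVal X := hv
      subst this
      exact mem_singleton_iff.2 rfl
    | succ i ih =>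
      rw [(hstep i).2]
      show _ ⊆ restr W ⁻¹' V (i + 1)
      refine approxZ_subset ?_ ?_ ?_
      · rintro v' ⟨v, hv, d, -, -, -, hg, hv'⟩
        refine subset_approxZ M _ ⟨restr W v, ih v hv, d, (hGs i _).1 hg, ?_⟩
        rw [show v' = _ from hv', restr_step]
      · exact fun u hu w hw θ hθ => convexVal_approxZ M _ _ hu _ hw θ hθ
      · intro v hv v' hd
        exact union_approxZ M _ _ hv _ ⟨fun x => hd.1 x, fun x y => hd.2 x y⟩
  obtain ⟨u, d, hu0, hu⟩ := exists_run hGr hGc (V := V) rfl hVs fun i => by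
    obtain ⟨_, v, hv, _⟩ := (hstep i).1
    exact ⟨_, hsub i v hv⟩
  let v : ℕ → ClockVal X := fun n =>
    Nat.rec (zeroVal X) (fun i w => resetVal (τ i).reset (ClockVal.add w (d i))) n
  have hvs : ∀ i, v (i + 1) = resetVal (τ i).reset (ClockVal.add (v i) (d i)) := fun i => rfl
  have hvu : ∀ i, restr W (v i) = u i := by
    intro i
    induction i with
    | zero => rw [hu0]; rfl
    | succ i ih => rw [hvs, restr_step, ih, (hu i).2]
  have hst : ∀ i, A.Step (τ i) (d i) ((nd i).1, v i) ((nd (i + 1)).1, v (i + 1)) := fun i => by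
    refine ⟨(htr i).1, (htr i).2.1, (htr i).2.2, ?_, rfl⟩
    rw [hGs]
    have := (hu i).1
    rw [← hvu i] at this
    exact this
  refine ⟨v, d, ⟨?_, hst⟩, fun i => ?_⟩
  · simp only [h0, ZGInit]; rfl
  · induction i with
    | zero => rw [h0]; exact mem_singleton_iff.2 rfl
    | succ i ih =>
      rw [(hstep i).2]
      exact subset_approxZ M _ ⟨v i, ih, d i, hst i⟩

/-! ### Divergence of time -/

/-- One time unit passes between a reset of `x` and a later moment with `x ≥ 1`. -/
lemma nonZeno_of_recurrent {X : Type} {x : X} {v : ℕ → ClockVal X} {d : ℕ → NNReal}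
    {R : ℕ → Set X} (hv : ∀ i, v (i + 1) = resetVal (R i) (ClockVal.add (v i) (d i)))
    (hR : ∀ n, ∃ i ≥ n, x ∈ R i) (hlb : ∀ n, ∃ i ≥ n, 1 ≤ v i x + d i) : NonZeno d := by
  have key : ∀ i, x ∈ R i → ∀ k,
      ∑ j ∈ Finset.range (i + 1), d j + v (i + 1 + k) x ≤ ∑ j ∈ Finset.range (i + 1 + k), d j := by
    intro i hi k
    induction k with
    | zero => simp [hv, resetVal, hi]
    | succ k ih =>
      have : v (i + 1 + (k + 1)) x ≤ v (i + 1 + k) x + d (i + 1 + k) := by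
        rw [← add_assoc, hv]
        by_cases hx : x ∈ R (i + 1 + k) <;> simp [resetVal, ClockVal.add, hx]
      calc _ ≤ ∑ j ∈ Finset.range (i + 1), d j + (v (i + 1 + k) x + d (i + 1 + k)) :=
            add_le_add le_rfl this
        _ ≤ ∑ j ∈ Finset.range (i + 1 + k), d j + d (i + 1 + k) := by
            rw [← add_assoc]; exact add_le_add ih le_rfl
        _ = _ := (Finset.sum_range_succ _ (i + 1 + k)).symm
  have grow : ∀ m : ℕ, ∃ n, (m : NNReal) ≤ ∑ j ∈ Finset.range n, d j := by
    intro m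
    induction m with
    | zero => exact ⟨0, by simp⟩
    | succ m ih =>
      obtain ⟨n, hn⟩ := ih
      obtain ⟨i, hi, hx⟩ := hR n
      obtain ⟨j, hj, h1⟩ := hlb (i + 1)
      obtain ⟨k, rfl⟩ := Nat.exists_eq_add_of_le hj
      refine ⟨i + 1 + k + 1, ?_⟩
      have hmono : ∑ j ∈ Finset.range n, d j ≤ ∑ j ∈ Finset.range (i + 1), d j :=
        Finset.sum_le_sum_of_subset (Finset.range_mono (by omega))
      rw [Finset.sum_range_succ _ (i + 1 + k)]
      push_cast
      calc (m : NNReal) + 1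
          ≤ ∑ j ∈ Finset.range (i + 1), d j + (v (i + 1 + k) x + d (i + 1 + k)) :=
            add_le_add (hn.trans hmono) h1
        _ ≤ _ := by rw [← add_assoc]; exact add_le_add (key i hx k) le_rfl
  refine ENNReal.eq_top_of_forall_nnreal_le fun r => ?_
  obtain ⟨m, hm⟩ := exists_nat_ge r
  obtain ⟨n, hn⟩ := grow m
  calc (r : ENNReal) ≤ ((∑ j ∈ Finset.range n, d j : NNReal) : ENNReal) := by
        exact_mod_cast hm.trans hn
    _ = ∑ j ∈ Finset.range n, (d j : ENNReal) := by push_cast; rfl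
    _ ≤ _ := ENNReal.sum_le_tsum _

end ZoneProof

/-- a reachable SCC of `ZG^a(A)` with an accepting node, a reset
of a clock `x` and a transition whose guard implies `x ≥ 1` witnesses a
non-Zeno run of `A` satisfying the Büchi condition. -/
theorem reachable_scc_with_lower_bounded_reset_clock_to_buchi_nonempty
    {Q X : Type} (A : TBA Q X) (M : ℕ) (hM : A.IsMaxConst M)
    (Γ : Set (RNode Q X)) (hSCC : IsSCC (ZGStep A M) Γ)
    (hreach : ∃ n ∈ Γ, n ∈ ZGReach A M)
    (hacc : ∃ n ∈ Γ, n.1 ∈ A.acc)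
    (x : X)
    (hreset : ∃ n ∈ Γ, ∃ n' ∈ Γ, ∃ t, SGTrans A (approxZ M) t n n' ∧ x ∈ t.reset)
    (hlb : ∃ n ∈ Γ, ∃ n' ∈ Γ, ∃ t, SGTrans A (approxZ M) t n n' ∧
      LowerBoundsClock t n.2 x) :
    ∃ (st : ℕ → Q × ClockVal X) (ds : ℕ → NNReal) (ts : ℕ → TBATrans Q X),
      IsRun A st ds ts ∧ NonZeno ds ∧ BuchiRun A st := by
  obtain ⟨a, haΓ, ha⟩ := hreach
  obtain ⟨f, hfΓ, hf⟩ := hacc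
  obtain ⟨r, hr, r', hr', t, ht, hxt⟩ := hreset
  obtain ⟨b, hb, b', hb', s, hs, hsx⟩ := hlb
  have walk : ∀ n ∈ Γ, ∀ n' ∈ Γ, ∃ l, ZoneProof.Walk (SGTrans A (approxZ M)) n l n' :=
    fun n hn n' hn' => ZoneProof.exists_walk (fun _ _ h => h.2.2) (hSCC.2 n hn n' hn')
  obtain ⟨l₀, hl₀⟩ := ZoneProof.exists_walk (step := SGTrans A (approxZ M)) (fun _ _ h => h) ha
  obtain ⟨l₁, hl₁⟩ := walk a haΓ r hr
  obtain ⟨l₂, hl₂⟩ := walk r' hr' f hfΓ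
  obtain ⟨l₃, hl₃⟩ := walk f hfΓ b hb
  obtain ⟨l₄, hl₄⟩ := walk b' hb' a haΓ
  -- The part of the cycle from the accepting node on is nonempty, so that node starts an edge.
  have hw₃ : ZoneProof.Walk (SGTrans A (approxZ M)) f (l₃ ++ (b, s, b') :: l₄) a :=
    hl₃.append ⟨rfl, hs, hl₄⟩
  obtain ⟨e, he, hef⟩ := hw₃.exists_src (by simp)
  have hcyc : ZoneProof.Walk (SGTrans A (approxZ M)) a
      (l₁ ++ (r, t, r') :: (l₂ ++ (l₃ ++ (b, s, b') :: l₄))) a :=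
    hl₁.append ⟨rfl, ht, hl₂.append hw₃⟩
  obtain ⟨nd, τ, h0, hstep, hfin, hinf⟩ := ZoneProof.exists_lasso hl₀ hcyc (by simp)
  obtain ⟨v, d, hrun, hmem⟩ := ZoneProof.exists_run_along hM.1 h0 hstep hfin
  refine ⟨_, d, τ, hrun, ?_, ?_⟩
  · refine ZoneProof.nonZeno_of_recurrent (x := x) (v := v) (R := fun i => (τ i).reset)
      (fun i => (hrun.2 i).2.2.2.2) (fun n => ?_) (fun n => ?_)
    · obtain ⟨i, hi, -, h⟩ := hinf (r, t, r') (by simp) n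
      exact ⟨i, hi, by rw [h]; exact hxt⟩
    · obtain ⟨i, hi, h1, h2⟩ := hinf (b, s, b') (by simp) n
      refine ⟨i, hi, ?_⟩
      have hg := (hrun.2 i).2.2.2.1
      have hv := hmem i
      rw [h2] at hg
      rw [h1] at hv
      have := hsx (v i) hv (d i) hg
      exact_mod_cast this
  · refine Set.infinite_of_forall_exists_gt fun n => ?_
    obtain ⟨i, hi, h1, -⟩ := hinf e (by
      simp only [List.mem_append, List.mem_cons] at he ⊢
      tauto) (n + 1)
    exact ⟨i, by simpa [h1, hef] using hf, hi⟩
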